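/- arXiv:0908.3521 — 2 statements merged into one kernel-verified Lean document; each statement's English description precedes it below -/
import Mathlib

section
/- Let p be an odd prime, Δ an integer not divisible by p, set ε = 1 if the image of Δ in ℤ/pℤ is a square and ε = −1 otherwise, and let k be a natural number. Consider the quadratic form in n = 2k+2 variables B(x₀, x₁, …, x_{2k+1}) = x₀² − Δ·x₁² + ∑_{i=1}^{k} x_{2i}·x_{2i+1}. Let t be a nonzero integer with p-adic valuation T, and for a natural number ℓ let X_ℓ = N_ℓ / p^{nℓ}, where N_ℓ is the number of v ∈ (ℤ/p^ℓℤ)^n with B(v) = t̄². Then for every real z with |z| < 1, setting w = z/p^{k+1}, the series ∑_{ℓ≥0} z^ℓ · X_ℓ converges with sum (1 − ε·w/p)(1 − ε·w^{2T+1}) / ((1 − z/p)(1 − ε·w)). -/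
/-!
Over `ℤ/p^ℓ`, call a solution of `B(v) = c` primitive if it is nonzero modulo `p`. By Hensel's lemma
the primitive solutions are equidistributed over the nonzero solutions modulo `p`, and the latter
are counted over `𝔽_p`: a Jacobi sum gives the values of `x₀² - D x₁²`, and each hyperbolic plane is
summed over its value. Solutions `v = p w` exist for `ℓ ≥ 2` only if `p² ∣ c`, and then they
contribute `p^(-n)` times the density of the solutions of `B(w) = c / p²` modulo `p^(ℓ-2)`.

With `χ` the Legendre symbol of `D` and `F c = ∑ z^ℓ X_ℓ`, this gives
`F c = (1 - χ w / p) / (1 - z / p)` for `p ∤ c`, and for `p ∣ c`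
`F c = (1 - χ w / p) / (1 - z / p) * (1 + χ w) + w² F (c / p²)`, with the last term absent when
`p² ∤ c`. As `χ² = 1`, iterating turns `F c` into a geometric series in `χ w` with one more term
than there are factors `p` in `c`.
-/

open Finset QuadraticMap

/-- The quadratic form `x₀² - D x₁² + ∑ x₂ᵢ x₂ᵢ₊₁` (`1 ≤ i ≤ k`): the orthogonal sum of the norm
form of `R[√D]` and `k` hyperbolic planes. -/
def normHyperbolicForm {R : Type*} [CommRing R] (D : R) (k : ℕ) :
    QuadraticForm R (Fin (2 * k + 2) → R) :=
  linMulLin (LinearMap.proj 0) (LinearMap.proj 0)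
    - D • linMulLin (LinearMap.proj 1) (LinearMap.proj 1)
    + ∑ i : Fin k, linMulLin (LinearMap.proj ⟨2 * (i + 1), by omega⟩)
        (LinearMap.proj ⟨2 * (i + 1) + 1, by omega⟩)

namespace normHyperbolicForm

section CommRing

variable {R : Type*} [CommRing R] (D : R) (k : ℕ)

theorem apply (v : Fin (2 * k + 2) → R) :
    normHyperbolicForm D k v = v 0 ^ 2 - D * v 1 ^ 2
      + ∑ i : Fin k, v ⟨2 * (i + 1), by omega⟩ * v ⟨2 * (i + 1) + 1, by omega⟩ := by
  simp [normHyperbolicForm, pow_two]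

theorem map_apply {S : Type*} [CommRing S] (f : R →+* S) (v : Fin (2 * k + 2) → R) :
    f (normHyperbolicForm D k v) = normHyperbolicForm (f D) k (f ∘ v) := by
  simp [apply]

theorem apply_zero (v : Fin (2 * 0 + 2) → R) :
    normHyperbolicForm D 0 v = v 0 ^ 2 - D * v 1 ^ 2 := by
  simp [apply]

theorem apply_append (v : Fin (2 * k + 2) → R) (u : Fin 2 → R) :
    normHyperbolicForm D (k + 1) (Fin.append v u) = normHyperbolicForm D k v + u 0 * u 1 := by
  rw [apply, apply, Fin.sum_univ_castSucc, ← add_assoc]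
  congr 1
  · congr 2
    ext i
    exact congrArg₂ (· * ·) (Fin.append_left v u ⟨2 * (i + 1), by omega⟩)
      (Fin.append_left v u ⟨2 * (i + 1) + 1, by omega⟩)
  · exact congrArg₂ (· * ·) (Fin.append_right v u 0) (Fin.append_right v u 1)

theorem polar_append (v v' : Fin (2 * k + 2) → R) (u u' : Fin 2 → R) :
    polar (normHyperbolicForm D (k + 1)) (Fin.append v u) (Fin.append v' u')
      = polar (normHyperbolicForm D k) v v' + (u 0 * u' 1 + u 1 * u' 0) := by
  have append_add : Fin.append v u + Fin.append v' u' = Fin.append (v + v') (u + u') := by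
    ext i
    refine Fin.addCases (fun i ↦ ?_) (fun i ↦ ?_) i <;> simp
  simp only [polar, append_add, apply_append, Pi.add_apply]
  ring

theorem exists_polar_ne_zero {F : Type*} [Field F] (h2 : (2 : F) ≠ 0) {D : F} (hD : D ≠ 0)
    {k : ℕ} {a : Fin (2 * k + 2) → F} (ha : a ≠ 0) :
    ∃ u, polar (normHyperbolicForm D k) a u ≠ 0 := by
  contrapose! ha
  induction k with
  | zero =>
    have h0 := ha (Pi.single 0 1)
    have h1 := ha (Pi.single 1 1)
    simp only [polar, apply_zero, Pi.add_apply, Pi.single_eq_same, Pi.single_eq_of_ne, ne_eq,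
      zero_ne_one, one_ne_zero, not_false_eq_true, add_zero] at h0 h1
    have ha0 : 2 * a 0 = 0 := by linear_combination h0
    have ha1 : 2 * (D * a 1) = 0 := by linear_combination -h1
    ext i
    fin_cases i
    · simpa [h2] using ha0
    · simpa [h2, hD] using ha1
  | succ k ih =>
    obtain ⟨v, u, rfl⟩ : ∃ v u, a = Fin.append (m := 2 * k + 2) (n := 2) v u :=
      ⟨_, _, Fin.append_castAdd_natAdd.symm⟩
    have hv : v = 0 := ih fun v' ↦ by simpa [polar_append] using ha (Fin.append v' 0)
    have hu0 : u 0 = 0 := by simpa [polar_append] using ha (Fin.append 0 ![0, 1])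
    have hu1 : u 1 = 0 := by simpa [polar_append] using ha (Fin.append 0 ![1, 0])
    have hu : u = 0 := by
      ext i
      fin_cases i <;> assumption
    ext i
    refine Fin.addCases (fun i ↦ ?_) (fun i ↦ ?_) i <;> simp [hv, hu]

end CommRing

end normHyperbolicForm

section FiniteField

theorem card_filter_mul_eq {G₀ : Type*} [GroupWithZero G₀] [Fintype G₀] [DecidableEq G₀]
    (d : G₀) :
    (#{q : G₀ × G₀ | q.1 * q.2 = d} : ℤ)
      = Fintype.card G₀ - 1 + if d = 0 then (Fintype.card G₀ : ℤ) else 0 := by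
  have fiber_of_ne {x : G₀} (hx : x ≠ 0) : #{y | x * y = d} = 1 := by
    simp [← eq_inv_mul_iff_mul_eq₀ hx, filter_eq']
  rw [card_filter, Fintype.sum_prod_type, ← sum_erase_add _ _ (mem_univ (0 : G₀))]
  simp only [← card_filter]
  rw [sum_congr rfl fun x hx ↦ fiber_of_ne (ne_of_mem_erase hx)]
  split_ifs with hd
  · simp [hd, card_erase_of_mem, Nat.cast_sub Fintype.card_pos]
  · simp [Ne.symm hd, card_erase_of_mem, Nat.cast_sub Fintype.card_pos]

variable {F : Type*} [Field F] [Fintype F] [DecidableEq F]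

theorem sum_comp_sq_eq_sum_quadraticChar_add_one_mul (hF : ringChar F ≠ 2) (f : F → ℤ) :
    ∑ x, f (x ^ 2) = ∑ a, (quadraticChar F a + 1) * f a := by
  rw [← sum_fiberwise (s := univ) (g := fun x : F ↦ x ^ 2)]
  refine sum_congr rfl fun a _ ↦ ?_
  rw [sum_congr rfl fun x hx ↦ congrArg f (mem_filter.mp hx).2, sum_const, nsmul_eq_mul,
    ← quadraticChar_card_sqrts hF, Set.toFinset_ofPred]

theorem sum_quadraticChar_add_mul (hF : ringChar F ≠ 2) (c : F) {D : F} (hD : D ≠ 0) :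
    ∑ a, quadraticChar F (c + D * a) = 0 := by
  rw [← quadraticChar_sum_zero hF]
  exact ((Equiv.mulLeft₀ D hD).trans (Equiv.addLeft c)).sum_comp (quadraticChar F)

theorem sum_quadraticChar_mul_quadraticChar_add_mul (hF : ringChar F ≠ 2) (c : F) {D : F}
    (hD : D ≠ 0) :
    ∑ a, quadraticChar F a * quadraticChar F (c + D * a)
      = quadraticChar F D * if c = 0 then (Fintype.card F : ℤ) - 1 else -1 := by
  split_ifs with hc
  · have term_eq (a : F) : quadraticChar F a * quadraticChar F (c + D * a)
        = quadraticChar F D * if a = 0 then 0 else 1 := by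
      split_ifs with ha
      · simp [ha]
      · rw [hc, zero_add, map_mul, mul_left_comm, ← map_mul, ← pow_two, quadraticChar_sq_one' ha]
    simp only [term_eq, ← mul_sum]
    simp [sum_ite, filter_ne', Nat.cast_sub Fintype.card_pos]
  · -- The substitution `a = -(c / D) b` turns the sum into a Jacobi sum.
    have hcD : -c / D ≠ 0 := div_ne_zero (neg_ne_zero.mpr hc) hD
    have term_eq (b : F) : quadraticChar F (-c / D * b) * quadraticChar F (c + D * (-c / D * b))
        = quadraticChar F (-1 * D) * (quadraticChar F b * quadraticChar F (1 - b)) := by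
      have hsq : quadraticChar F (c ^ 2 / D ^ 2) = 1 := by
        rw [← div_pow]
        exact quadraticChar_sq_one' (div_ne_zero hc hD)
      calc quadraticChar F (-c / D * b) * quadraticChar F (c + D * (-c / D * b))
          = quadraticChar F (c ^ 2 / D ^ 2 * (-1 * D * (b * (1 - b)))) := by
            rw [← map_mul]
            congr 1
            field_simp
            ring
        _ = _ := by rw [map_mul, hsq, one_mul, map_mul, map_mul _ b]
    have jacobi : jacobiSum (quadraticChar F) (quadraticChar F) = -quadraticChar F (-1) := by
      have h := jacobiSum_nontrivial_inv (quadraticChar_ne_one hF)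
      rwa [(quadraticChar_isQuadratic F).inv] at h
    rw [← Equiv.sum_comp (Equiv.mulLeft₀ _ hcD)]
    simp only [Equiv.mulLeft₀_apply, term_eq, ← mul_sum]
    rw [← jacobiSum, jacobi, map_mul]
    have := quadraticChar_sq_one (F := F) (neg_ne_zero.mpr one_ne_zero)
    linear_combination (-quadraticChar F D) * this

theorem card_filter_sq_sub_mul_sq_eq (hF : ringChar F ≠ 2) {D : F} (hD : D ≠ 0) (c : F) :
    (#{q : F × F | q.1 ^ 2 - D * q.2 ^ 2 = c} : ℤ)
      = Fintype.card F
        + quadraticChar F D * if c = 0 then (Fintype.card F : ℤ) - 1 else -1 := by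
  have count_x (y : F) : (∑ x : F, if x ^ 2 - D * y ^ 2 = c then (1 : ℤ) else 0)
      = quadraticChar F (c + D * y ^ 2) + 1 := by
    rw [← quadraticChar_card_sqrts hF, Set.toFinset_ofPred, natCast_card_filter]
    simp only [sub_eq_iff_eq_add]
  calc (#{q : F × F | q.1 ^ 2 - D * q.2 ^ 2 = c} : ℤ)
      = ∑ y : F, (quadraticChar F (c + D * y ^ 2) + 1) := by
        rw [natCast_card_filter, Fintype.sum_prod_type, sum_comm]
        exact sum_congr rfl fun y _ ↦ count_x y
    _ = ∑ a, (quadraticChar F a + 1) * (quadraticChar F (c + D * a) + 1) :=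
        sum_comp_sq_eq_sum_quadraticChar_add_one_mul hF
          (fun a ↦ quadraticChar F (c + D * a) + 1)
    _ = _ := by
        simp only [add_one_mul, mul_add_one, sum_add_distrib, quadraticChar_sum_zero hF,
          sum_quadraticChar_add_mul hF c hD, sum_quadraticChar_mul_quadraticChar_add_mul hF c hD,
          sum_const, card_univ, nsmul_eq_mul]
        ring

theorem normHyperbolicForm.card_filter_eq (hF : ringChar F ≠ 2) {D : F} (hD : D ≠ 0) (k : ℕ)
    (c : F) :
    (#{v | normHyperbolicForm D k v = c} : ℤ)
      = Fintype.card F ^ (2 * k + 1) + quadraticChar F D * Fintype.card F ^ k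
          * if c = 0 then (Fintype.card F : ℤ) - 1 else -1 := by
  induction k with
  | zero =>
    rw [card_equiv (t := {q : F × F | q.1 ^ 2 - D * q.2 ^ 2 = c}) (finTwoArrowEquiv F)
      fun v ↦ by simp [apply_zero], card_filter_sq_sub_mul_sq_eq hF hD]
    ring
  | succ k ih =>
    have hyperbolic_step : #{v | normHyperbolicForm D (k + 1) v = c}
        = ∑ v, #{q : F × F | q.1 * q.2 = c - normHyperbolicForm D k v} := by
      simp only [card_filter]
      let append : (Fin (2 * k + 2) → F) × (Fin 2 → F) ≃ (Fin (2 * (k + 1) + 2) → F) :=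
        Fin.appendEquiv (2 * k + 2) 2
      rw [← append.sum_comp, Fintype.sum_prod_type]
      refine sum_congr rfl fun v _ ↦ Fintype.sum_equiv (finTwoArrowEquiv F) _ _ fun u ↦ ?_
      simp [show append (v, u) = Fin.append v u from rfl, apply_append, eq_sub_iff_add_eq']
    rw [hyperbolic_step]
    push_cast
    simp only [card_filter_mul_eq, sub_eq_zero, eq_comm (a := c), sum_add_distrib, sum_const,
      ← sum_filter, nsmul_eq_mul, ih,
      card_univ, Fintype.card_fun, Fintype.card_fin, Nat.cast_pow]
    split_ifs <;> ring

theorem normHyperbolicForm.card_filter_ne_zero_and_eq (hF : ringChar F ≠ 2) {D : F} (hD : D ≠ 0)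
    (k : ℕ) (c : F) :
    (#{v | v ≠ 0 ∧ normHyperbolicForm D k v = c} : ℤ)
      = (Fintype.card F ^ (k + 1) - quadraticChar F D)
        * (Fintype.card F ^ k + if c = 0 then quadraticChar F D else 0) := by
  have total := card_filter_eq hF hD k c
  have chi_sq := quadraticChar_sq_one hD
  split_ifs at total ⊢ with hc
  · subst hc
    have erase_eq : ({v | v ≠ 0 ∧ normHyperbolicForm D k v = 0} : Finset _)
        = ({v | normHyperbolicForm D k v = 0} : Finset _).erase 0 := by
      ext v
      simp
    rw [erase_eq, cast_card_erase_of_mem (by simp), total]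
    linear_combination chi_sq
  · have ne_zero_of_apply_eq (v) (hv : normHyperbolicForm D k v = c) : v ≠ 0 := by
      rintro rfl
      exact hc (by simpa using hv.symm)
    rw [filter_congr fun v _ ↦ and_iff_right_of_imp (ne_zero_of_apply_eq v), total]
    ring

end FiniteField

section Lifting

theorem card_filter_map_mem_mul_card_image {G H 𝓕 : Type*} [AddGroup G] [AddMonoid H] [Fintype G]
    [DecidableEq H] [FunLike 𝓕 G H] [AddMonoidHomClass 𝓕 G H] (f : 𝓕)
    {A : Finset H} (hA : A ⊆ univ.image f) :
    #{g | f g ∈ A} * #(univ.image f) = #A * Fintype.card G := by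
  have card_filter_map_mem {B : Finset H} (hB : B ⊆ univ.image f) :
      #{g | f g ∈ B} = #B * #{g | f g = 0} := by
    rw [card_eq_sum_card_fiberwise (f := f) (t := B) fun g hg ↦ by simpa using hg]
    refine sum_const_nat fun b hb ↦ ?_
    obtain ⟨g, -, hg⟩ := mem_image.mp (hB hb)
    rw [filter_filter, filter_congr fun g _ ↦ and_iff_right_of_imp fun h : f g = b ↦ h ▸ hb]
    exact AddMonoidHom.card_fiber_eq_of_mem_range f ⟨g, hg⟩ ⟨0, map_zero f⟩
  have card_G : Fintype.card G = #(univ.image f) * #{g | f g = 0} := by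
    simpa using card_filter_map_mem Subset.rfl
  rw [card_filter_map_mem hA, card_G]
  ring

theorem card_filter_map_mem_mul_card_of_surjective {G H 𝓕 : Type*} [AddGroup G] [AddMonoid H]
    [Fintype G] [Fintype H] [DecidableEq H] [FunLike 𝓕 G H] [AddMonoidHomClass 𝓕 G H] {f : 𝓕}
    (hf : Function.Surjective f) (A : Finset H) :
    #{g | f g ∈ A} * Fintype.card H = #A * Fintype.card G := by
  have image_eq : univ.image f = univ := image_univ_of_surjective hf
  simpa only [image_eq, card_univ] using
    card_filter_map_mem_mul_card_image f (A := A) (by simp only [image_eq, subset_univ])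

theorem bijOn_mul_add_mul_self {R F : Type*} [CommRing R] [Finite R] [Field F] {φ : R →+* F}
    [IsLocalHom φ] {b : R} (hb : φ b ≠ 0) (q : R) :
    Set.BijOn (fun s ↦ s * (b + s * q)) {s | φ s = 0} {s | φ s = 0} := by
  have mapsTo : Set.MapsTo (fun s ↦ s * (b + s * q)) {s | φ s = 0} {s | φ s = 0} := by
    intro s (hs : φ s = 0)
    simp [hs]
  refine ((Set.toFinite _).injOn_iff_bijOn_of_mapsTo mapsTo).mp ?_
  intro s (hs : φ s = 0) s' (hs' : φ s' = 0) (h : s * (b + s * q) = s' * (b + s' * q))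
  have isUnit : IsUnit (b + (s + s') * q) := by
    refine IsUnit.of_map φ _ (Ne.isUnit ?_)
    simpa [hs, hs'] using hb
  have mul_eq_zero : (s - s') * (b + (s + s') * q) = 0 := by linear_combination h
  exact sub_eq_zero.mp (isUnit.mul_left_eq_zero.mp mul_eq_zero)

variable {R M : Type*} [CommRing R] [AddCommGroup M] [Module R M]

section Hensel

variable {F N : Type*} [Field F] [AddCommGroup N] [Module F N] {φ : R →+* F} [IsLocalHom φ]
  {f : M →ₛₗ[φ] N} {Q : QuadraticForm R M} {Q' : QuadraticForm F N}

theorem existsUnique_apply_add_smul_eq [Finite R] (hQ : ∀ v, φ (Q v) = Q' (f v))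
    {v u : M} (hvu : polar Q' (f v) (f u) ≠ 0) {c : R} (hc : φ c = Q' (f v)) :
    ∃! s, φ s = 0 ∧ Q (v + s • u) = c := by
  have map_polar : φ (polar Q v u) = polar Q' (f v) (f u) := by simp [polar, hQ]
  have apply_add_smul (s : R) : Q (v + s • u) = Q v + s * (polar Q v u + s * Q u) := by
    rw [QuadraticMap.map_add Q, polar_smul_right, QuadraticMap.map_smul]
    simp only [smul_eq_mul]
    ring
  simp only [apply_add_smul, ← eq_sub_iff_add_eq']
  have bijOn := bijOn_mul_add_mul_self (φ := φ) (map_polar ▸ hvu) (Q u)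
  obtain ⟨s, hs, hsc⟩ := bijOn.surjOn (show φ (c - Q v) = 0 by rw [map_sub, hc, hQ, sub_self])
  exact ⟨s, ⟨hs, hsc⟩, fun s' ⟨hs', hs'c⟩ ↦ bijOn.injOn hs' hs (hs'c.trans hsc.symm)⟩

variable [Fintype R] [Fintype M] [DecidableEq R] [DecidableEq F] [DecidableEq N]

theorem card_ker_mul_card_filter_map_eq_and_apply_eq (hf : Function.Surjective f)
    (hQ : ∀ v, φ (Q v) = Q' (f v)) {a u : N} (hau : polar Q' a u ≠ 0) {c : R}
    (hc : φ c = Q' a) :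
    #{s | φ s = 0} * #{v | f v = a ∧ Q v = c} = #{v | f v = a} := by
  obtain ⟨u, rfl⟩ := hf u
  rw [← card_product]
  refine card_bij (fun q _ ↦ q.2 - q.1 • u) ?_ ?_ ?_
  · simp +contextual
  · simp only [mem_product, mem_filter_univ, Prod.forall, Prod.mk.injEq]
    intro s w ⟨hs, hwa, hw⟩ s' w' ⟨hs', _, hw'⟩ h
    have unique := existsUnique_apply_add_smul_eq hQ (v := w - s • u) (u := u) (c := c)
      (by simpa [hs, hwa] using hau) (by simpa [hs, hwa] using hc)
    obtain rfl : s = s' :=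
      unique.unique ⟨hs, by simpa using hw⟩ ⟨hs', by rw [h]; simpa using hw'⟩
    exact ⟨rfl, sub_left_injective h⟩
  · simp only [mem_product, mem_filter_univ, Prod.exists]
    rintro v rfl
    obtain ⟨s, ⟨hs, hsc⟩, -⟩ := existsUnique_apply_add_smul_eq hQ hau hc
    exact ⟨s, v + s • u, ⟨hs, by simp [hs], hsc⟩, by simp⟩

variable [Fintype N]

theorem card_ker_mul_card_filter_map_ne_zero_and_apply_eq (hf : Function.Surjective f)
    (hQ : ∀ v, φ (Q v) = Q' (f v)) (hnd : ∀ a ≠ 0, ∃ u, polar Q' a u ≠ 0) (c : R) :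
    #{s | φ s = 0} * #{v | f v ≠ 0 ∧ Q v = c} * Fintype.card N
      = #{a | a ≠ 0 ∧ Q' a = φ c} * Fintype.card M := by
  have mapsTo : Set.MapsTo f ({v | f v ≠ 0 ∧ Q v = c} : Finset M)
      ({a | a ≠ 0 ∧ Q' a = φ c} : Finset N) := by
    simp +contextual [Set.MapsTo, ← hQ]
  rw [← card_filter_map_mem_mul_card_of_surjective hf, card_eq_sum_card_fiberwise mapsTo, mul_sum,
    ← sum_card_fiberwise_eq_card_filter]
  refine congrArg (· * _) (sum_congr rfl fun a ha ↦ ?_)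
  obtain ⟨ha0, hac⟩ := mem_filter_univ a |>.mp ha
  obtain ⟨u, hau⟩ := hnd a ha0
  rw [← card_ker_mul_card_filter_map_eq_and_apply_eq hf hQ hau hac.symm, filter_filter]
  congr 3 with v
  grind

end Hensel

theorem card_filter_apply_eq_sq_mul_mul_card {S N : Type*} [CommRing S] [AddCommGroup N]
    [Module S N] [Fintype M] [Fintype N] [DecidableEq M] [DecidableEq R] [DecidableEq S]
    {ρ : R →+* S} {f : M →ₛₗ[ρ] N} {Q : QuadraticForm R M} {Q' : QuadraticForm S N}
    (hf : Function.Surjective f) (hQ : ∀ v, ρ (Q v) = Q' (f v)) {π : R}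
    (hρ : ∀ x, ρ x = 0 ↔ π ^ 2 * x = 0) (c : R) :
    #{v ∈ univ.image (π • · : M → M) | Q v = π ^ 2 * c} * Fintype.card N
      = #{a | Q' a = ρ c} * #(univ.image (π • · : M → M)) := by
  have apply_smul_eq_iff (w : M) : Q (π • w) = π ^ 2 * c ↔ Q' (f w) = ρ c := by
    rw [QuadraticMap.map_smul, smul_eq_mul, ← pow_two, ← hQ, ← sub_eq_zero, ← mul_sub, ← hρ,
      map_sub, sub_eq_zero]
  have smul_count : #{v | Q' (f v) = ρ c} * #(univ.image (π • · : M → M))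
      = #{v ∈ univ.image (π • · : M → M) | Q v = π ^ 2 * c} * Fintype.card M := by
    refine .trans ?_ (card_filter_map_mem_mul_card_image (DistribSMul.toAddMonoidHom M π)
      (filter_subset (fun v ↦ Q v = π ^ 2 * c) _))
    congr 2 with w
    simp [apply_smul_eq_iff]
  have map_count : #{v | Q' (f v) = ρ c} * Fintype.card N
      = #{a | Q' a = ρ c} * Fintype.card M := by
    classical
    simpa using card_filter_map_mem_mul_card_of_surjective hf {a | Q' a = ρ c}
  refine Nat.eq_of_mul_eq_mul_right (Fintype.card_pos (α := M)) ?_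
  linear_combination #(univ.image (π • · : M → M)) * map_count - Fintype.card N * smul_count

end Lifting

section PrimePower

/-- The coordinatewise application `(ι → R) → (ι → S)` of a ring homomorphism `R → S`, as a
semilinear map; used for the reduction of vectors over `ℤ/p^ℓ`. -/
def compLeftSemilinear {R S : Type*} [Semiring R] [Semiring S] (φ : R →+* S) (ι : Type*) :
    (ι → R) →ₛₗ[φ] (ι → S) where
  toFun v := φ ∘ v
  map_add' v w := by ext; simp
  map_smul' r v := by ext; simp

variable {p : ℕ} [Fact p.Prime] (m : ℕ)

variable (p) in
/-- Reduction modulo `p` on `ℤ/p^(m+1)`. -/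
def residueHom : ZMod (p ^ (m + 1)) →+* ZMod p :=
  ZMod.castHom (dvd_pow_self p m.succ_ne_zero) (ZMod p)

theorem surjective_residueHom : Function.Surjective (residueHom p m) :=
  ZMod.castHom_surjective _

theorem residueHom_eq_zero_iff (x : ZMod (p ^ (m + 1))) :
    residueHom p m x = 0 ↔ ∃ y, (p : ZMod (p ^ (m + 1))) * y = x := by
  refine ⟨fun hx ↦ ?_, ?_⟩
  · obtain ⟨n, rfl⟩ := ZMod.natCast_zmod_surjective x
    rw [map_natCast, ZMod.natCast_eq_zero_iff] at hx
    obtain ⟨y, rfl⟩ := hx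
    exact ⟨y, by push_cast; rfl⟩
  · rintro ⟨y, rfl⟩
    simp

instance isLocalHom_residueHom : IsLocalHom (residueHom p m) where
  map_nonunit x hx := by
    obtain ⟨n, rfl⟩ := ZMod.natCast_zmod_surjective x
    rw [map_natCast] at hx
    rw [ZMod.isUnit_natCast_iff_not_dvd_pow Fact.out m.succ_pos, ← ZMod.natCast_eq_zero_iff]
    exact hx.ne_zero

theorem card_ker_residueHom : #{x | residueHom p m x = 0} = p ^ m := by
  have h := card_filter_map_mem_mul_card_of_surjective (f := residueHom p m)
    (surjective_residueHom m) {0}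
  simp only [mem_singleton, ZMod.card, card_singleton, one_mul, pow_succ] at h
  exact Nat.eq_of_mul_eq_mul_right (NeZero.pos p) h

theorem castHom_eq_zero_iff_pow_mul_eq_zero {m ℓ j : ℕ} (h : ℓ = m + j) (x : ZMod (p ^ ℓ)) :
    ZMod.castHom (pow_dvd_pow p (by omega)) (ZMod (p ^ m)) x = 0
      ↔ (p : ZMod (p ^ ℓ)) ^ j * x = 0 := by
  subst h
  obtain ⟨n, rfl⟩ := ZMod.natCast_zmod_surjective x
  rw [map_natCast, ZMod.natCast_eq_zero_iff]
  norm_cast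
  rw [ZMod.natCast_eq_zero_iff, add_comm, pow_add,
    Nat.mul_dvd_mul_iff_left (pow_pos (NeZero.pos p) j)]

end PrimePower

section SolutionDensity

variable (p : ℕ) (D : ℤ) (k : ℕ) (c : ℤ)

/-- The proportion of vectors over `ℤ/p^ℓ` at which the form `normHyperbolicForm D k` takes the
value `c`. -/
noncomputable def solutionDensity (ℓ : ℕ) : ℚ :=
  Nat.card {v : Fin (2 * k + 2) → ZMod (p ^ ℓ) // normHyperbolicForm (D : ZMod (p ^ ℓ)) k v = c}
    / p ^ ((2 * k + 2) * ℓ)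

theorem solutionDensity_zero : solutionDensity p D k c 0 = 1 := by
  have : Unique {v : Fin (2 * k + 2) → ZMod (p ^ 0) //
      normHyperbolicForm (D : ZMod (p ^ 0)) k v = c} := by
    have : Subsingleton (ZMod (p ^ 0)) := inferInstanceAs (Subsingleton (ZMod 1))
    exact ⟨⟨0, Subsingleton.elim _ _⟩, fun v ↦ Subsingleton.elim _ _⟩
  rw [solutionDensity, Nat.card_unique]
  simp

variable [Fact p.Prime]

theorem solutionDensity_eq_card_filter (ℓ : ℕ) :
    solutionDensity p D k c ℓ
      = #{v | normHyperbolicForm (D : ZMod (p ^ ℓ)) k v = c} / p ^ ((2 * k + 2) * ℓ) := by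
  rw [solutionDensity, Nat.card_eq_fintype_card, Fintype.card_subtype]

/-- Coordinatewise reduction modulo `p`. -/
def reduceVec (m : ℕ) :
    (Fin (2 * k + 2) → ZMod (p ^ (m + 1))) →ₛₗ[residueHom p m] (Fin (2 * k + 2) → ZMod p) :=
  compLeftSemilinear (residueHom p m) _

variable {p} {k}

theorem surjective_reduceVec (m : ℕ) : Function.Surjective (reduceVec p k m) :=
  (surjective_residueHom m).comp_left

theorem residueHom_normHyperbolicForm (m : ℕ) (v : Fin (2 * k + 2) → ZMod (p ^ (m + 1))) :
    residueHom p m (normHyperbolicForm (D : ZMod (p ^ (m + 1))) k v)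
      = normHyperbolicForm (D : ZMod p) k (reduceVec p k m v) := by
  rw [normHyperbolicForm.map_apply, map_intCast]
  rfl

variable {D c}

theorem primitiveDensity_eq (hp2 : p ≠ 2) (hD : ¬ (p : ℤ) ∣ D) (m : ℕ) :
    (#{v | reduceVec p k m v ≠ 0 ∧ normHyperbolicForm (D : ZMod (p ^ (m + 1))) k v = c} : ℚ)
      / p ^ ((2 * k + 2) * (m + 1))
      = (1 - legendreSym p D / p ^ (k + 1))
        * (1 + if (p : ℤ) ∣ c then legendreSym p D / (p : ℚ) ^ k else 0) / p ^ (m + 1) := by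
  have hD : (D : ZMod p) ≠ 0 := (ZMod.intCast_zmod_eq_zero_iff_dvd ..).not.mpr hD
  have hp : ringChar (ZMod p) ≠ 2 := by rwa [ZMod.ringChar_zmod_n]
  have h2 : (2 : ZMod p) ≠ 0 := Ring.two_ne_zero hp
  have hp0 : (p : ℚ) ≠ 0 := NeZero.ne _
  have lift_count := card_ker_mul_card_filter_map_ne_zero_and_apply_eq (φ := residueHom p m)
    (surjective_reduceVec (k := k) m) (residueHom_normHyperbolicForm D m)
    (fun a ha ↦ normHyperbolicForm.exists_polar_ne_zero h2 hD ha) c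
  have residue_count := normHyperbolicForm.card_filter_ne_zero_and_eq hp hD k (c : ZMod p)
  simp only [card_ker_residueHom, map_intCast, Fintype.card_pi_const, ZMod.card,
    ZMod.intCast_zmod_eq_zero_iff_dvd] at lift_count residue_count
  rw [← legendreSym] at residue_count
  have lift_count' := congrArg (Nat.cast : ℕ → ℚ) lift_count
  have residue_count' := congrArg (Int.cast : ℤ → ℚ) residue_count
  push_cast at lift_count' residue_count'
  rw [div_eq_iff (by positivity)]
  refine mul_left_cancel₀ (show (p : ℚ) ^ m * p ^ (2 * k + 2) ≠ 0 by positivity) ?_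
  rw [mul_right_comm, lift_count', residue_count']
  split_ifs <;> field_simp <;> ring

theorem card_filter_reduceVec_eq_zero (m : ℕ) :
    #{v | reduceVec p k m v = 0} * p ^ (2 * k + 2) = p ^ ((2 * k + 2) * (m + 1)) := by
  have h := card_filter_map_mem_mul_card_of_surjective (surjective_reduceVec (p := p) (k := k) m)
    {0}
  simpa [← pow_mul, mul_comm] using h

theorem reduceVec_eq_zero_iff {m : ℕ} {v : Fin (2 * k + 2) → ZMod (p ^ (m + 1))} :
    reduceVec p k m v = 0 ↔ ∃ w, (p : ZMod (p ^ (m + 1))) • w = v := by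
  simp [funext_iff, reduceVec, residueHom_eq_zero_iff, compLeftSemilinear, Classical.skolem]

theorem dvd_of_reduceVec_eq_zero {m : ℕ} {v : Fin (2 * k + 2) → ZMod (p ^ (m + 1))}
    (hv : reduceVec p k m v = 0) (hvc : normHyperbolicForm (D : ZMod (p ^ (m + 1))) k v = c) :
    (p : ℤ) ∣ c := by
  rw [← ZMod.intCast_zmod_eq_zero_iff_dvd, ← map_intCast (residueHom p m), ← hvc,
    residueHom_normHyperbolicForm, hv, map_zero]

theorem sq_dvd_of_reduceVec_eq_zero {m : ℕ} {v : Fin (2 * k + 2) → ZMod (p ^ (m + 2))}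
    (hv : reduceVec p k (m + 1) v = 0)
    (hvc : normHyperbolicForm (D : ZMod (p ^ (m + 2))) k v = c) : (p : ℤ) ^ 2 ∣ c := by
  obtain ⟨w, rfl⟩ := reduceVec_eq_zero_iff.mp hv
  let φ : ZMod (p ^ (m + 2)) →+* ZMod (p ^ 2) := ZMod.castHom (pow_dvd_pow p (by omega)) _
  have sq_eq_zero : (p : ZMod (p ^ 2)) * p = 0 := by
    rw [← Nat.cast_mul, ← pow_two, ZMod.natCast_self]
  have cast_eq_zero : (c : ZMod (p ^ 2)) = 0 := by
    rw [← map_intCast φ, ← hvc, QuadraticMap.map_smul, smul_eq_mul, map_mul, map_mul, map_natCast,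
      sq_eq_zero, zero_mul]
  exact_mod_cast (ZMod.intCast_zmod_eq_zero_iff_dvd ..).mp cast_eq_zero

theorem imprimitiveDensity_sq_mul (m : ℕ) :
    (#{v | reduceVec p k (m + 1) v = 0 ∧
        normHyperbolicForm (D : ZMod (p ^ (m + 2))) k v = (p ^ 2 * c : ℤ)} : ℚ)
      / p ^ ((2 * k + 2) * (m + 2)) = solutionDensity p D k c m / p ^ (2 * k + 2) := by
  have hp0 : (p : ℚ) ≠ 0 := NeZero.ne _
  let ρ : ZMod (p ^ (m + 2)) →+* ZMod (p ^ m) :=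
    ZMod.castHom (pow_dvd_pow p (by omega)) _
  have ρ_surjective : Function.Surjective ρ := ZMod.castHom_surjective _
  have scale_count := card_filter_apply_eq_sq_mul_mul_card
    (f := compLeftSemilinear ρ (Fin (2 * k + 2)))
    (Q := normHyperbolicForm (D : ZMod (p ^ (m + 2))) k)
    (Q' := normHyperbolicForm (D : ZMod (p ^ m)) k) ρ_surjective.comp_left
    (fun v ↦ by rw [normHyperbolicForm.map_apply, map_intCast]; rfl)
    (castHom_eq_zero_iff_pow_mul_eq_zero rfl) c
  have image_eq : univ.image ((p : ZMod (p ^ (m + 2))) • · : (Fin (2 * k + 2) → _) → _)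
      = ({v | reduceVec p k (m + 1) v = 0} : Finset _) := by
    ext v
    simp [reduceVec_eq_zero_iff]
  have card_reduce := card_filter_reduceVec_eq_zero (p := p) (k := k) (m + 1)
  simp only [image_eq, filter_filter, map_intCast, Fintype.card_pi_const, ZMod.card] at scale_count
  rw [solutionDensity_eq_card_filter, div_div, div_eq_div_iff (by positivity) (by positivity)]
  norm_cast
  push_cast
  linear_combination p ^ (2 * k + 2) * scale_count
    + #{a | normHyperbolicForm (D : ZMod (p ^ m)) k a = c} * card_reduce

theorem solutionDensity_succ (hp2 : p ≠ 2) (hD : ¬ (p : ℤ) ∣ D) (m : ℕ) :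
    solutionDensity p D k c (m + 1)
      = (1 - legendreSym p D / p ^ (k + 1))
          * (1 + if (p : ℤ) ∣ c then legendreSym p D / (p : ℚ) ^ k else 0) / p ^ (m + 1)
        + #{v | reduceVec p k m v = 0 ∧ normHyperbolicForm (D : ZMod (p ^ (m + 1))) k v = c}
          / p ^ ((2 * k + 2) * (m + 1)) := by
  rw [← primitiveDensity_eq hp2 hD, ← add_div, solutionDensity_eq_card_filter,
    ← card_filter_add_card_filter_not (reduceVec p k m · = 0), filter_filter, filter_filter,
    Nat.cast_add, add_comm]
  simp only [and_comm, ne_eq]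

theorem solutionDensity_succ_of_not_dvd (hp2 : p ≠ 2) (hD : ¬ (p : ℤ) ∣ D) (hc : ¬ (p : ℤ) ∣ c)
    (m : ℕ) :
    solutionDensity p D k c (m + 1) = (1 - legendreSym p D / p ^ (k + 1)) / p ^ (m + 1) := by
  rw [solutionDensity_succ hp2 hD,
    filter_false_of_mem fun v _ hv ↦ hc (dvd_of_reduceVec_eq_zero hv.1 hv.2)]
  simp [hc]

theorem solutionDensity_one_of_dvd (hp2 : p ≠ 2) (hD : ¬ (p : ℤ) ∣ D) (hc : (p : ℤ) ∣ c) :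
    solutionDensity p D k c 1
      = (1 - legendreSym p D / p ^ (k + 1)) * (1 + legendreSym p D / p ^ k) / p
        + 1 / p ^ (2 * k + 2) := by
  have filter_eq : ({v | reduceVec p k 0 v = 0 ∧
      normHyperbolicForm (D : ZMod (p ^ (0 + 1))) k v = c} : Finset _) = {0} := by
    have natCast_eq_zero : (p : ZMod (p ^ (0 + 1))) = 0 := by
      rw [ZMod.natCast_eq_zero_iff, zero_add, pow_one]
    have intCast_eq_zero : (c : ZMod (p ^ (0 + 1))) = 0 := by
      simpa [ZMod.intCast_zmod_eq_zero_iff_dvd] using hc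
    refine eq_singleton_iff_unique_mem.mpr ⟨by simp [intCast_eq_zero], fun v hv ↦ ?_⟩
    obtain ⟨w, rfl⟩ := reduceVec_eq_zero_iff.mp (mem_filter_univ v |>.mp hv).1
    rw [natCast_eq_zero, zero_smul]
  rw [← zero_add 1, solutionDensity_succ hp2 hD, filter_eq]
  simp [hc]

theorem solutionDensity_add_two_of_dvd_of_not_sq_dvd (hp2 : p ≠ 2) (hD : ¬ (p : ℤ) ∣ D)
    (hc : (p : ℤ) ∣ c) (hc2 : ¬ (p : ℤ) ^ 2 ∣ c) (m : ℕ) :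
    solutionDensity p D k c (m + 2)
      = (1 - legendreSym p D / p ^ (k + 1)) * (1 + legendreSym p D / p ^ k) / p ^ (m + 2) := by
  rw [solutionDensity_succ hp2 hD,
    filter_false_of_mem fun v _ hv ↦ hc2 (sq_dvd_of_reduceVec_eq_zero hv.1 hv.2)]
  simp [hc]

theorem solutionDensity_sq_mul (hp2 : p ≠ 2) (hD : ¬ (p : ℤ) ∣ D) (m : ℕ) :
    solutionDensity p D k (p ^ 2 * c) (m + 2)
      = (1 - legendreSym p D / p ^ (k + 1)) * (1 + legendreSym p D / p ^ k) / p ^ (m + 2)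
        + solutionDensity p D k c m / p ^ (2 * k + 2) := by
  rw [solutionDensity_succ hp2 hD, imprimitiveDensity_sq_mul,
    if_pos ((dvd_pow_self _ two_ne_zero).mul_right c)]

end SolutionDensity

section GeneratingFunction

theorem hasSum_pow_mul_of_add_two_eq {𝕜 : Type*} [NormedField 𝕜] {a u : ℕ → 𝕜} {b q z G : 𝕜}
    (hzq : ‖z / q‖ < 1) (ha : ∀ m, a (m + 2) = b / q ^ (m + 2) + u m)
    (hG : HasSum (fun m ↦ z ^ m * u m) G) :
    HasSum (fun m ↦ z ^ m * a m)
      (a 0 + z * a 1 + b * (z / q) ^ 2 / (1 - z / q) + z ^ 2 * G) := by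
  have term_eq (m : ℕ) : z ^ (m + 2) * a (m + 2)
      = b * (z / q) ^ 2 * (z / q) ^ m + z ^ 2 * (z ^ m * u m) := by
    rw [ha]
    ring
  have sum_eq : a 0 + z * a 1 + b * (z / q) ^ 2 / (1 - z / q) + z ^ 2 * G
      - ∑ m ∈ range 2, z ^ m * a m = b * (z / q) ^ 2 * (1 - z / q)⁻¹ + z ^ 2 * G := by
    rw [sum_range_succ, sum_range_one]
    ring
  rw [← hasSum_nat_add_iff' 2, sum_eq]
  simp only [term_eq]
  exact ((hasSum_geometric_of_norm_lt_one hzq).mul_left _).add (hG.mul_left _)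

variable {𝕜 : Type*} [RCLike 𝕜] {p : ℕ} [Fact p.Prime] {D c : ℤ} {k : ℕ} {z w : 𝕜}

theorem norm_div_natCast_pow_succ_lt_one (hz : ‖z‖ < p) (k : ℕ) : ‖z / p ^ (k + 1)‖ < 1 := by
  have one_le : (1 : ℝ) ≤ p := mod_cast NeZero.one_le
  rw [norm_div, norm_pow, RCLike.norm_natCast, div_lt_one (by positivity)]
  exact hz.trans_le (le_self_pow₀ one_le k.succ_ne_zero)

theorem natCast_sub_ne_zero_of_norm_lt {n : ℕ} (hz : ‖z‖ < n) : (n : 𝕜) - z ≠ 0 :=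
  sub_ne_zero.mpr fun h ↦ by simp [← h] at hz

theorem legendreSym_cast_sq_eq_one (hD : ¬ (p : ℤ) ∣ D) : (legendreSym p D : 𝕜) ^ 2 = 1 := by
  have hD : (D : ZMod p) ≠ 0 := (ZMod.intCast_zmod_eq_zero_iff_dvd ..).not.mpr hD
  exact_mod_cast congrArg (Int.cast : ℤ → 𝕜) (legendreSym.sq_one p hD)

theorem hasSum_solutionDensity_of_not_dvd (hp2 : p ≠ 2) (hD : ¬ (p : ℤ) ∣ D)
    (hc : ¬ (p : ℤ) ∣ c) (hz : ‖z‖ < p) (hw : w = z / p ^ (k + 1)) :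
    HasSum (fun ℓ ↦ z ^ ℓ * (solutionDensity p D k c ℓ : 𝕜))
      ((1 - legendreSym p D * w / p) / (1 - z / p)) := by
  have hx : ‖z / p‖ < 1 := by simpa using norm_div_natCast_pow_succ_lt_one hz 0
  have hpz := natCast_sub_ne_zero_of_norm_lt hz
  have hp0 : (p : 𝕜) ≠ 0 := NeZero.ne _
  have density_succ (m : ℕ) : (solutionDensity p D k c (m + 1) : 𝕜)
      = (1 - legendreSym p D / p ^ (k + 1)) / p ^ (m + 1) := by
    rw [solutionDensity_succ_of_not_dvd hp2 hD hc]
    push_cast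
    rfl
  have hasSum := hasSum_pow_mul_of_add_two_eq (a := fun ℓ ↦ (solutionDensity p D k c ℓ : 𝕜))
    (u := 0) (G := 0) hx (fun m ↦ by rw [density_succ, Pi.zero_apply, add_zero]) (by simp)
  convert hasSum using 1
  rw [solutionDensity_zero, density_succ 0, hw, one_sub_div hp0]
  field_simp
  ring

theorem hasSum_solutionDensity_of_dvd (hp2 : p ≠ 2) (hD : ¬ (p : ℤ) ∣ D) (hc : (p : ℤ) ∣ c)
    {u : ℕ → 𝕜} (hu : ∀ m, (solutionDensity p D k c (m + 2) : 𝕜)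
      = (1 - legendreSym p D / p ^ (k + 1)) * (1 + legendreSym p D / p ^ k) / p ^ (m + 2) + u m)
    (hz : ‖z‖ < p) (hw : w = z / p ^ (k + 1)) {G : 𝕜} (hG : HasSum (fun m ↦ z ^ m * u m) G) :
    HasSum (fun ℓ ↦ z ^ ℓ * (solutionDensity p D k c ℓ : 𝕜))
      ((1 - legendreSym p D * w / p) / (1 - z / p) * (1 + legendreSym p D * w) + z ^ 2 * G) := by
  have hx : ‖z / p‖ < 1 := by simpa using norm_div_natCast_pow_succ_lt_one hz 0
  have hpz := natCast_sub_ne_zero_of_norm_lt hz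
  have hp0 : (p : 𝕜) ≠ 0 := NeZero.ne _
  have chi_sq := legendreSym_cast_sq_eq_one (𝕜 := 𝕜) hD
  convert hasSum_pow_mul_of_add_two_eq
    (a := fun ℓ ↦ (solutionDensity p D k c ℓ : 𝕜)) hx hu hG using 2
  rw [solutionDensity_zero, solutionDensity_one_of_dvd hp2 hD hc, hw]
  push_cast
  generalize (legendreSym p D : 𝕜) = χ at chi_sq ⊢
  field_simp
  linear_combination p ^ (3 * k + 3) * z * (p - z) * chi_sq

theorem hasSum_solutionDensity_of_dvd_of_not_sq_dvd (hp2 : p ≠ 2) (hD : ¬ (p : ℤ) ∣ D)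
    (hc : (p : ℤ) ∣ c) (hc2 : ¬ (p : ℤ) ^ 2 ∣ c) (hz : ‖z‖ < p) (hw : w = z / p ^ (k + 1)) :
    HasSum (fun ℓ ↦ z ^ ℓ * (solutionDensity p D k c ℓ : 𝕜))
      ((1 - legendreSym p D * w / p) / (1 - z / p) * (1 + legendreSym p D * w)) := by
  have density_add_two (m : ℕ) : (solutionDensity p D k c (m + 2) : 𝕜)
      = (1 - legendreSym p D / p ^ (k + 1)) * (1 + legendreSym p D / p ^ k) / p ^ (m + 2) + 0 := by
    rw [solutionDensity_add_two_of_dvd_of_not_sq_dvd hp2 hD hc hc2, add_zero]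
    push_cast
    rfl
  simpa using hasSum_solutionDensity_of_dvd hp2 hD hc density_add_two hz hw (G := 0) (by simp)

theorem hasSum_solutionDensity_sq_mul (hp2 : p ≠ 2) (hD : ¬ (p : ℤ) ∣ D) (hz : ‖z‖ < p)
    (hw : w = z / p ^ (k + 1)) {G : 𝕜}
    (hG : HasSum (fun ℓ ↦ z ^ ℓ * (solutionDensity p D k c ℓ : 𝕜)) G) :
    HasSum (fun ℓ ↦ z ^ ℓ * (solutionDensity p D k (p ^ 2 * c) ℓ : 𝕜))
      ((1 - legendreSym p D * w / p) / (1 - z / p) * (1 + legendreSym p D * w) + w ^ 2 * G) := by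
  have density_add_two (m : ℕ) : (solutionDensity p D k (p ^ 2 * c) (m + 2) : 𝕜)
      = (1 - legendreSym p D / p ^ (k + 1)) * (1 + legendreSym p D / p ^ k) / p ^ (m + 2)
        + solutionDensity p D k c m / p ^ (2 * k + 2) := by
    rw [solutionDensity_sq_mul hp2 hD]
    push_cast
    rfl
  have hG' := hG.div_const (p ^ (2 * k + 2) : 𝕜)
  simp only [mul_div_assoc] at hG'
  convert hasSum_solutionDensity_of_dvd hp2 hD ((dvd_pow_self _ two_ne_zero).mul_right c)
    density_add_two hz hw hG' using 2
  rw [hw]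
  ring

theorem hasSum_solutionDensity_pow_mul (hp2 : p ≠ 2) (hD : ¬ (p : ℤ) ∣ D)
    (hc : ¬ (p : ℤ) ∣ c) (hz : ‖z‖ < p) (hw : w = z / p ^ (k + 1)) :
    ∀ V : ℕ, HasSum (fun ℓ ↦ z ^ ℓ * (solutionDensity p D k (p ^ V * c) ℓ : 𝕜))
      ((1 - legendreSym p D * w / p) / (1 - z / p)
        * ∑ i ∈ range (V + 1), (legendreSym p D * w) ^ i)
  | 0 => by simpa using hasSum_solutionDensity_of_not_dvd hp2 hD hc hz hw
  | 1 => by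
    have not_sq_dvd : ¬ (p : ℤ) ^ 2 ∣ p * c := by
      rwa [pow_two, mul_dvd_mul_iff_left (Nat.cast_ne_zero.mpr (NeZero.ne p))]
    simpa [sum_range_succ] using
      hasSum_solutionDensity_of_dvd_of_not_sq_dvd hp2 hD (dvd_mul_right ..) not_sq_dvd hz hw
  | V + 2 => by
    have hasSum := hasSum_solutionDensity_sq_mul hp2 hD hz hw
      (hasSum_solutionDensity_pow_mul hp2 hD hc hz hw V)
    rw [← mul_assoc, ← pow_add, add_comm 2] at hasSum
    convert hasSum using 1
    have term_eq (i : ℕ) :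
        (legendreSym p D * w) ^ (i + 1 + 1) = (legendreSym p D * w) ^ i * w ^ 2 := by
      linear_combination
        (legendreSym p D * w) ^ i * w ^ 2 * legendreSym_cast_sq_eq_one (𝕜 := 𝕜) hD
    rw [sum_range_succ', sum_range_succ']
    simp only [term_eq, ← sum_mul]
    ring

theorem exists_eq_pow_padicValInt_mul (hc : c ≠ 0) :
    ∃ u, ¬ (p : ℤ) ∣ u ∧ c = p ^ padicValInt p c * u := by
  obtain ⟨u, hu⟩ := padicValInt_dvd (p := p) c
  refine ⟨u, fun ⟨u', hu'⟩ ↦ ?_, hu⟩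
  have : (p : ℤ) ^ (padicValInt p c + 1) ∣ c := ⟨u', by rw [pow_succ, mul_assoc, ← hu', ← hu]⟩
  simpa [hc] using padicValInt_dvd_iff _ c |>.mp this

theorem legendreSym_mul_ne_one (hD : ¬ (p : ℤ) ∣ D) (hw : ‖w‖ < 1) : legendreSym p D * w ≠ 1 := by
  intro h
  have w_sq : w ^ 2 = 1 := by
    linear_combination (legendreSym p D * w + 1) * h
      - w ^ 2 * legendreSym_cast_sq_eq_one (𝕜 := 𝕜) hD
  have norm_sq : ‖w‖ ^ 2 = 1 := by rw [← norm_pow, w_sq, norm_one]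
  exact hw.ne ((pow_eq_one_iff_of_nonneg (norm_nonneg w) two_ne_zero).mp norm_sq)

theorem hasSum_solutionDensity (hp2 : p ≠ 2) (hD : ¬ (p : ℤ) ∣ D) (hc : c ≠ 0) (hz : ‖z‖ < p)
    (hw : w = z / p ^ (k + 1)) :
    HasSum (fun ℓ ↦ z ^ ℓ * (solutionDensity p D k c ℓ : 𝕜))
      ((1 - legendreSym p D * w / p) * (1 - (legendreSym p D * w) ^ (padicValInt p c + 1))
        / ((1 - z / p) * (1 - legendreSym p D * w))) := by
  obtain ⟨u, hu, hcu⟩ := exists_eq_pow_padicValInt_mul (p := p) hc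
  have one_sub_ne_zero : 1 - legendreSym p D * w ≠ 0 :=
    sub_ne_zero.mpr (legendreSym_mul_ne_one hD (hw ▸ norm_div_natCast_pow_succ_lt_one hz k)).symm
  have hasSum := hasSum_solutionDensity_pow_mul hp2 hD hu hz hw (padicValInt p c)
  rwa [← hcu, eq_div_of_mul_eq one_sub_ne_zero (geom_sum_mul_neg _ _), div_mul_div_comm] at hasSum

theorem legendreSym_eq_ite_isSquare (hD : ¬ (p : ℤ) ∣ D) [Decidable (IsSquare (D : ZMod p))] :
    legendreSym p D = if IsSquare (D : ZMod p) then 1 else -1 := by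
  have hD : (D : ZMod p) ≠ 0 := (ZMod.intCast_zmod_eq_zero_iff_dvd ..).not.mpr hD
  split_ifs with h
  · exact (legendreSym.eq_one_iff p hD).mpr h
  · exact (legendreSym.eq_neg_one_iff p).mpr h

end GeneratingFunction

open Classical in
theorem stmt_15_general {𝕜 : Type*} [RCLike 𝕜] (p : ℕ) (hp : p.Prime) (hp2 : p ≠ 2) (Δ : ℤ)
    (hΔ : ¬ (p : ℤ) ∣ Δ) (ε : 𝕜) (hε : ε = if IsSquare (Δ : ZMod p) then 1 else -1) (k : ℕ)
    (c : ℤ) (hc : c ≠ 0) (V : ℕ) (hV : padicValInt p c = V)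
    (z : 𝕜) (hz : ‖z‖ < p) (w : 𝕜) (hw : w = z / p ^ (k + 1)) :
    HasSum
      (fun ℓ : ℕ => z ^ ℓ *
        ((Nat.card {v : Fin (2 * k + 2) → ZMod (p ^ ℓ) //
            v 0 ^ 2 - (Δ : ZMod (p ^ ℓ)) * v 1 ^ 2 +
              ∑ i : Fin k, v ⟨2 * (i + 1), by omega⟩ * v ⟨2 * (i + 1) + 1, by omega⟩
              = (c : ZMod (p ^ ℓ))} : 𝕜) / p ^ ((2 * k + 2) * ℓ)))
      ((1 - ε * w / p) * (1 - (ε * w) ^ (V + 1)) / ((1 - z / p) * (1 - ε * w))) := by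
  have : Fact p.Prime := ⟨hp⟩
  have ε_eq : ε = legendreSym p Δ := by
    rw [hε, legendreSym_eq_ite_isSquare hΔ]
    split_ifs <;> simp
  subst hV ε_eq
  simpa [solutionDensity, normHyperbolicForm.apply] using
    hasSum_solutionDensity hp2 hΔ hc hz hw

open Classical in
theorem stmt_15 (p : ℕ) (hp : p.Prime) (hp2 : p ≠ 2) (Δ : ℤ) (hΔ : ¬ (p : ℤ) ∣ Δ)
    (ε : ℝ) (hε : ε = if IsSquare (Δ : ZMod p) then 1 else -1) (k : ℕ)
    (t : ℤ) (ht : t ≠ 0) (T : ℕ) (hT : padicValInt p t = T)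
    (z : ℝ) (hz : |z| < 1) (w : ℝ) (hw : w = z / p ^ (k + 1)) :
    HasSum
      (fun ℓ : ℕ => z ^ ℓ *
        ((Nat.card {v : Fin (2 * k + 2) → ZMod (p ^ ℓ) //
            v ⟨0, by omega⟩ ^ 2 - (Δ : ZMod (p ^ ℓ)) * v ⟨1, by omega⟩ ^ 2 +
              ∑ i : Fin k, v ⟨2 * i + 2, by have := i.isLt; omega⟩ *
                v ⟨2 * i + 3, by have := i.isLt; omega⟩
              = (t : ZMod (p ^ ℓ)) ^ 2} : ℝ) / p ^ ((2 * k + 2) * ℓ)))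
      ((1 - ε * w / p) * (1 - ε * w ^ (2 * T + 1)) / ((1 - z / p) * (1 - ε * w))) := by
  have : Fact p.Prime := ⟨hp⟩
  have val_sq : padicValInt p (t ^ 2) = 2 * T := by
    rw [pow_two, padicValInt.mul ht ht, hT, two_mul]
  have ε_pow : ε ^ (2 * T + 1) = ε := by
    rw [hε]
    split_ifs <;> simp [pow_succ, pow_mul]
  simpa [mul_pow, ε_pow, mul_add_one] using
    stmt_15_general p hp hp2 Δ hΔ ε hε k (t ^ 2) (pow_ne_zero 2 ht) (2 * T) val_sq
      z (hz.trans (mod_cast hp.one_lt)) w hw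
end

section
/- Let p be an odd prime, Δ an integer not divisible by p, set ε = 1 if the image of Δ in ℤ/pℤ is a square and ε = −1 otherwise, and let k be a natural number. Consider the quadratic form in n = 2k+1 variables B(x₀, x₁, …, x_{2k}) = Δ·x₀² + ∑_{i=1}^{k} x_{2i−1}·x_{2i}. For natural numbers T and ℓ, let N_{T,ℓ} be the number of v ∈ (ℤ/p^ℓℤ)^n with B(v) equal to the image of p^{2T} in ℤ/p^ℓℤ. Then for all real a, z with |a| < 1 and |z| < 1, setting w = z/p^{k+1} and u = z²/p^{2k+1}, the double series indexed by (T,ℓ) ∈ ℕ×ℕ with terms a^T · z^ℓ · N_{T,ℓ}/p^{nℓ} converges with sum (1 − w²)(1 − ε·a·w) / ((1 − z/p)(1 − a)(1 − ε·w)(1 − a·u)). -/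
/-!
For a quadratic form `B` in `n` variables write `α(N, t)` for the density of the solutions of
`B(v) = t` modulo `N`. Split the vectors modulo `p ^ l` into unimodular ones and multiples of `p`.
If the polar form of `B` is nondegenerate modulo `p`, Hensel's lemma shows that each lift by a
factor `p` multiplies the density of the unimodular solutions by `p⁻¹`. A solution `p • v` of
`B = p ^ 2 * t` modulo `p ^ (l + 2)` amounts to a solution `v` of `B = t` modulo `p ^ l`, which
gives
`α(p ^ (l + 2), p ^ 2 * t) = (α(p, 0) - p ^ (-n)) * p ^ (-l - 1) + p ^ (-n) * α(p ^ l, t)`.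
Hence the row sums `R T = ∑ l, z ^ l * α(p ^ l, p ^ (2 * T))` satisfy an affine recurrence
`R (T + 1) = H + z ^ 2 * p ^ (-n) * R T`, and the double series is determined by `α(p, 0)` and
`α(p, 1)`. For `D * x ^ 2 + ∑ i, y i * z i` with `n = 2 * k + 1` these are found by conditioning on
`y`: if `y ≠ 0`, the equation is a nonzero affine condition on `z`; if `y = 0`, it is
`D * x ^ 2 = t` with `z` free.
-/

open Matrix

/-- The proportion of the elements of a finite type that satisfy `P`. -/
noncomputable def density {α : Type*} (P : α → Prop) : ℝ :=
  Nat.card {x // P x} / Nat.card α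

section Density

variable {α β G H : Type*}

lemma density_congr {P Q : α → Prop} (h : ∀ x, P x ↔ Q x) : density P = density Q :=
  congrArg density (funext fun x => propext (h x))

lemma density_nonneg (P : α → Prop) : 0 ≤ density P := by
  unfold density
  positivity

lemma density_le_one [Finite α] (P : α → Prop) : density P ≤ 1 :=
  div_le_one_of_le₀ (by exact_mod_cast Finite.card_subtype_le P) (Nat.cast_nonneg _)

lemma density_of_forall [Finite α] [Nonempty α] {P : α → Prop} (h : ∀ x, P x) : density P = 1 := by
  rw [density, Nat.card_congr (Equiv.subtypeUnivEquiv h)]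
  exact div_self (Nat.cast_ne_zero.2 Nat.card_pos.ne')

lemma density_eq (a : α) : density (· = a) = (Nat.card α : ℝ)⁻¹ := by
  simp [density]

lemma density_comp_equiv (e : α ≃ β) (P : β → Prop) : density (fun x => P (e x)) = density P := by
  rw [density, density, Nat.card_congr (e.subtypeEquiv fun _ => Iff.rfl), Nat.card_congr e]

lemma density_and_add_density_and_not [Finite α] (P Q : α → Prop) :
    density (fun x => Q x ∧ P x) + density (fun x => ¬Q x ∧ P x) = density P := by
  classical
  have := Fintype.ofFinite α
  simp only [density, ← add_div, Nat.card_eq_fintype_card, Fintype.card_subtype, ← Nat.cast_add]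
  rw [← Finset.card_filter_add_card_filter_not (s := Finset.univ.filter P) Q,
    Finset.filter_filter, Finset.filter_filter]
  simp only [and_comm]

lemma density_not [Finite α] [Nonempty α] (P : α → Prop) :
    density (fun x => ¬P x) = 1 - density P := by
  have h := density_and_add_density_and_not (fun _ : α => True) P
  simp only [and_true, density_of_forall (P := fun _ : α => True) fun _ => trivial] at h
  linarith

lemma density_prod (P : α → Prop) (Q : β → Prop) :
    density (fun x : α × β => P x.1 ∧ Q x.2) = density P * density Q := by
  rw [density, Nat.card_congr (Equiv.subtypeProdEquivProd (p := P) (q := Q))]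
  simp only [density, Nat.card_prod, Nat.cast_mul]
  ring

variable [AddGroup G] [AddGroup H]

lemma card_ker_mul_card {f : G →+ H} (hf : Function.Surjective f) :
    Nat.card f.ker * Nat.card H = Nat.card G := by
  rw [← f.ker.card_mul_index, AddSubgroup.index_ker, AddMonoidHom.range_eq_top.2 hf,
    AddSubgroup.card_top]

lemma density_eq_mul_of_fiber [Finite G] {f : G →+ H} (hf : Function.Surjective f)
    {P : G → Prop} {Q : H → Prop} {δ : ℝ} (hPQ : ∀ x, P x → Q (f x))
    (hδ : ∀ x, Q (f x) → density (fun d : f.ker => P (x + d)) = δ) :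
    density P = δ * density Q := by
  have : Finite H := Finite.of_surjective f hf
  have := Fintype.ofFinite {y // Q y}
  let g : {x // P x} → {y // Q y} := fun x => ⟨f x, hPQ x x.2⟩
  have card_fiber (y : {y // Q y}) : (Nat.card {x // g x = y} : ℝ) = δ * Nat.card f.ker := by
    obtain ⟨x, hx⟩ := hf y
    have e : {x // g x = y} ≃ {d : f.ker // P (x + d)} :=
      { toFun x' := ⟨f.fiberEquivKer x ⟨x'.1.1, by simpa [hx] using congrArg Subtype.val x'.2⟩,
          by simpa using x'.1.2⟩
        invFun d := ⟨⟨x + d, d.2⟩, Subtype.ext (by simp [g, hx, AddMonoidHom.mem_ker.1 d.1.2])⟩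
        left_inv x' := by ext; simp
        right_inv d := by ext; simp }
    rw [Nat.card_congr e, ← hδ x (hx ▸ y.2), density,
      div_mul_cancel₀ _ (Nat.cast_ne_zero.2 Nat.card_pos.ne')]
  have card_eq : (Nat.card {x // P x} : ℝ) = Nat.card {y // Q y} * (δ * Nat.card f.ker) := by
    rw [← Nat.card_congr (Equiv.sigmaFiberEquiv g), Nat.card_sigma, Nat.cast_sum,
      Finset.sum_congr rfl fun y _ => card_fiber y]
    simp
  have hker : (Nat.card f.ker : ℝ) ≠ 0 := Nat.cast_ne_zero.2 Nat.card_pos.ne'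
  rw [density, density, card_eq, ← card_ker_mul_card hf, Nat.cast_mul]
  field_simp

lemma density_comp_of_surjective [Finite G] {f : G →+ H} (hf : Function.Surjective f)
    (Q : H → Prop) : density (fun x => Q (f x)) = density Q := by
  rw [density_eq_mul_of_fiber hf (fun _ h => h) (δ := 1), one_mul]
  intro x hx
  exact density_of_forall fun d => by rwa [map_add, AddMonoidHom.mem_ker.1 d.2, add_zero]

lemma density_mem_range_and [Finite G] [Finite H] (f : G →+ H) (P : H → Prop) :
    density (fun y => y ∈ f.range ∧ P y) = density (fun x => P (f x)) / f.range.index := by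
  have h : density (fun x => P (f x)) = density (fun y : f.range => P y) :=
    density_comp_of_surjective f.rangeRestrict_surjective fun y : f.range => P y
  have e := Equiv.subtypeSubtypeEquivSubtypeInter (· ∈ f.range) P
  rw [h, density, density, div_div, Nat.card_congr e, ← Nat.cast_mul, f.range.card_mul_index]

end Density

section Unimodular

variable {ι R S : Type*} [Fintype ι] [CommRing R] [CommRing S]

/-- A vector is unimodular if its coordinates generate the unit ideal; over `ZMod (p ^ l)` with
`0 < l` these are the primitive vectors, those with a coordinate prime to `p`. -/
def IsUnimodular (v : ι → R) : Prop :=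
  ∃ w, w ⬝ᵥ v = 1

lemma IsUnimodular.map {v : ι → R} (hv : IsUnimodular v) (φ : R →+* S) : IsUnimodular (φ ∘ v) := by
  obtain ⟨w, hw⟩ := hv
  exact ⟨φ ∘ w, by rw [← φ.map_dotProduct, hw, map_one]⟩

lemma IsUnimodular.of_isUnit {v w : ι → R} (h : IsUnit (w ⬝ᵥ v)) : IsUnimodular v :=
  ⟨h.unit⁻¹.val • w, by rw [smul_dotProduct, smul_eq_mul, h.val_inv_mul]⟩

lemma isUnimodular_iff_of_isLocalHom {φ : R →+* S} (hφ : Function.Surjective φ) [IsLocalHom φ]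
    {v : ι → R} : IsUnimodular v ↔ IsUnimodular (φ ∘ v) := by
  refine ⟨fun hv => hv.map φ, fun ⟨w', hw'⟩ => ?_⟩
  obtain ⟨w, rfl⟩ := hφ.comp_left w'
  rw [← φ.map_dotProduct] at hw'
  exact .of_isUnit (isUnit_of_map_unit φ _ (hw' ▸ isUnit_one))

lemma isUnimodular_iff_ne_zero {F : Type*} [Field F] {v : ι → F} : IsUnimodular v ↔ v ≠ 0 := by
  classical
  refine ⟨?_, fun hv => ?_⟩
  · rintro ⟨w, hw⟩ rfl
    simp at hw
  · obtain ⟨i, hi⟩ := Function.ne_iff.1 hv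
    exact .of_isUnit (w := Pi.single i 1) (by simpa using hi)

lemma isLocalHom_of_mul_ker_eq_zero {φ : R →+* S} (hφ : Function.Surjective φ)
    (hker : ∀ x y, φ x = 0 → φ y = 0 → x * y = 0) : IsLocalHom φ := by
  refine ⟨fun x hx => ?_⟩
  obtain ⟨y, hy⟩ := hφ ↑hx.unit⁻¹
  have hxy : φ (x * y - 1) = 0 := by rw [map_sub, map_mul, hy, hx.mul_val_inv, map_one, sub_self]
  have h : IsUnit (x * y - 1 + 1) :=
    IsNilpotent.isUnit_add_one ⟨2, by rw [pow_two, hker _ _ hxy hxy]⟩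
  exact isUnit_of_mul_isUnit_left (by rwa [sub_add_cancel] at h)

end Unimodular

section QuadraticForm

variable {ι R S : Type*} [Fintype ι] [DecidableEq ι] [CommRing R] [CommRing S]

lemma toQuadraticForm'_apply (A : Matrix ι ι R) (v : ι → R) :
    A.toQuadraticForm' v = v ⬝ᵥ A *ᵥ v := by
  rw [toQuadraticForm', LinearMap.BilinMap.toQuadraticMap_apply, toLinearMap₂'_apply']

lemma polar_toQuadraticForm' (A : Matrix ι ι R) (v d : ι → R) :
    QuadraticMap.polar A.toQuadraticForm' v d = v ⬝ᵥ (A + Aᵀ) *ᵥ d := by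
  rw [toQuadraticForm', LinearMap.BilinMap.polar_toQuadraticMap, toLinearMap₂'_apply',
    toLinearMap₂'_apply', add_mulVec, dotProduct_add, mulVec_transpose, dotProduct_comm v (d ᵥ* A),
    dotProduct_mulVec d]

lemma map_toQuadraticForm' (φ : R →+* S) (A : Matrix ι ι R) (v : ι → R) :
    φ (A.toQuadraticForm' v) = (A.map φ).toQuadraticForm' (φ ∘ v) := by
  rw [toQuadraticForm'_apply, toQuadraticForm'_apply, φ.map_dotProduct]
  exact congrArg _ (funext (φ.map_mulVec A v))

lemma isUnimodular_of_isUnit_toQuadraticForm' {A : Matrix ι ι R} {v : ι → R}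
    (h : IsUnit (A.toQuadraticForm' v)) : IsUnimodular v :=
  .of_isUnit (by rwa [toQuadraticForm'_apply, dotProduct_comm] at h)

lemma IsUnimodular.exists_polar_eq {A : Matrix ι ι R} (hA : IsUnit (A + Aᵀ).det) {v : ι → R}
    (hv : IsUnimodular v) : ∃ d, ∀ c : R, QuadraticMap.polar A.toQuadraticForm' v (c • d) = c := by
  obtain ⟨w, hw⟩ := hv
  refine ⟨(A + Aᵀ)⁻¹ *ᵥ w, fun c => ?_⟩
  rw [polar_toQuadraticForm', mulVec_smul, mulVec_mulVec, mul_nonsing_inv _ hA, one_mulVec,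
    dotProduct_smul, dotProduct_comm, hw, smul_eq_mul, mul_one]

lemma toQuadraticForm'_eq_zero_of_mem_ker {φ : R →+* S}
    (hker : ∀ x y, φ x = 0 → φ y = 0 → x * y = 0) (A : Matrix ι ι R) {d : ι → R}
    (hd : φ ∘ d = 0) : A.toQuadraticForm' d = 0 := by
  rw [toQuadraticForm'_apply]
  refine Finset.sum_eq_zero fun i _ => hker _ _ (congrFun hd i) ?_
  rw [φ.map_mulVec, hd, mulVec_zero, Pi.zero_apply]

lemma density_ker_polar_eq [Finite R] (φ : R →+* S) {A : Matrix ι ι R} (hA : IsUnit (A + Aᵀ).det)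
    {v : ι → R} (hv : IsUnimodular v) {c : R} (hc : φ c = 0) :
    density (fun d : (φ.toAddMonoidHom.compLeft ι).ker =>
      QuadraticMap.polar A.toQuadraticForm' v d = c) = (Nat.card φ.toAddMonoidHom.ker : ℝ)⁻¹ := by
  have polar_mem_ker (d : (φ.toAddMonoidHom.compLeft ι).ker) :
      A.toQuadraticForm'.polarBilin v d ∈ φ.toAddMonoidHom.ker := by
    change φ (QuadraticMap.polar A.toQuadraticForm' v d) = 0
    have hd : φ ∘ (d : ι → R) = 0 := d.2
    rw [polar_toQuadraticForm', φ.map_dotProduct, dotProduct]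
    exact Finset.sum_eq_zero fun i _ => by
      rw [Function.comp_apply (f := φ) (g := _ *ᵥ _), φ.map_mulVec, hd, mulVec_zero, Pi.zero_apply,
        mul_zero]
  let g : (φ.toAddMonoidHom.compLeft ι).ker →+ φ.toAddMonoidHom.ker :=
    ((A.toQuadraticForm'.polarBilin v).toAddMonoidHom.comp
      (φ.toAddMonoidHom.compLeft ι).ker.subtype).codRestrict _ polar_mem_ker
  have hg : Function.Surjective g := by
    obtain ⟨d, hd⟩ := hv.exists_polar_eq hA
    intro c
    have hcd : φ ∘ (c.1 • d) = 0 := by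
      ext i
      simp [show φ c.1 = 0 from c.2]
    exact ⟨⟨c.1 • d, hcd⟩, Subtype.ext (hd c)⟩
  rw [← density_eq (⟨c, hc⟩ : φ.toAddMonoidHom.ker), ← density_comp_of_surjective hg]
  exact density_congr fun d => (Subtype.ext_iff (a1 := g d) (a2 := ⟨c, hc⟩)).symm

/-- Hensel's lemma: on the kernel of the reduction the form is linear to first order, with linear
part onto at a unimodular vector, so that each solution lifts in equally many ways. -/
lemma density_isUnimodular_and_eq [Finite R] {φ : R →+* S}
    (hφ : Function.Surjective φ) (hker : ∀ x y, φ x = 0 → φ y = 0 → x * y = 0)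
    {A : Matrix ι ι R} (hA : IsUnit (A + Aᵀ).det) (t : R) :
    density (fun v : ι → R => IsUnimodular v ∧ A.toQuadraticForm' v = t) =
      (Nat.card φ.toAddMonoidHom.ker : ℝ)⁻¹ *
        density (fun v : ι → S => IsUnimodular v ∧ (A.map φ).toQuadraticForm' v = φ t) := by
  have := isLocalHom_of_mul_ker_eq_zero hφ hker
  refine density_eq_mul_of_fiber (f := φ.toAddMonoidHom.compLeft ι) hφ.comp_left
    (fun v ⟨hv, hvt⟩ => ⟨hv.map φ, ?_⟩) fun v ⟨hv, hvt⟩ => ?_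
  · rw [← hvt]
    exact (map_toQuadraticForm' φ A v).symm
  replace hvt : φ (t - A.toQuadraticForm' v) = 0 := by
    rw [map_sub, map_toQuadraticForm', ← hvt]
    exact sub_self _
  have hprim : IsUnimodular v := (isUnimodular_iff_of_isLocalHom hφ).2 hv
  rw [← density_ker_polar_eq φ hA hprim hvt]
  refine density_congr fun d => ?_
  have hd : φ ∘ (d : ι → R) = 0 := d.2
  have hvd : IsUnimodular (v + d.1) := by
    refine (isUnimodular_iff_of_isLocalHom hφ).2 ?_
    have : φ ∘ (v + d.1) = φ ∘ v := by rw [← add_zero (φ ∘ v), ← hd]; ext; simp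
    rwa [this]
  rw [and_iff_right hvd, QuadraticMap.map_add A.toQuadraticForm',
    toQuadraticForm'_eq_zero_of_mem_ker hker A hd, add_zero, eq_sub_iff_add_eq']

end QuadraticForm

section LocalDensity

lemma castHom_eq_zero_iff {a b : ℕ} (h : a ∣ b) (x : ZMod b) :
    ZMod.castHom h (ZMod a) x = 0 ↔ (a : ZMod b) ∣ x := by
  obtain ⟨x, rfl⟩ := ZMod.intCast_surjective x
  constructor
  · rw [map_intCast, ZMod.intCast_zmod_eq_zero_iff_dvd]
    exact fun hx => by simpa using map_dvd (Int.castRingHom (ZMod b)) hx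
  · exact fun hx => by simpa using map_dvd (ZMod.castHom h (ZMod a)) hx

lemma natCast_mul_eq_natCast_mul_iff {a b c : ℕ} (ha : a ≠ 0) (h : a * b = c) (x y : ZMod c) :
    a * x = a * y ↔ ZMod.castHom (Dvd.intro_left a h) (ZMod b) x =
      ZMod.castHom (Dvd.intro_left a h) (ZMod b) y := by
  obtain ⟨z, hz⟩ := ZMod.intCast_surjective (x - y)
  rw [← sub_eq_zero, ← mul_sub, ← sub_eq_zero (b := ZMod.castHom _ _ y), ← map_sub, ← hz,
    map_intCast, ← Int.cast_natCast, ← Int.cast_mul, ZMod.intCast_zmod_eq_zero_iff_dvd,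
    ZMod.intCast_zmod_eq_zero_iff_dvd, ← h, Nat.cast_mul,
    mul_dvd_mul_iff_left (Nat.cast_ne_zero.2 ha)]

lemma range_natCast_smul_eq_ker (ι : Type*) {a b : ℕ} (h : a ∣ b) :
    (DistribSMul.toAddMonoidHom (ι → ZMod b) (a : ZMod b)).range =
      ((ZMod.castHom h (ZMod a)).toAddMonoidHom.compLeft ι).ker := by
  ext v
  have hker : v ∈ ((ZMod.castHom h (ZMod a)).toAddMonoidHom.compLeft ι).ker ↔
      ∀ i, (a : ZMod b) ∣ v i := by
    simp only [← castHom_eq_zero_iff h]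
    exact funext_iff
  rw [hker]
  refine ⟨?_, fun hv => ?_⟩
  · rintro ⟨w, rfl⟩ i
    exact dvd_mul_right _ _
  · choose w hw using hv
    exact ⟨w, funext fun i => (hw i).symm⟩

lemma index_range_natCast_smul (ι : Type*) [Finite ι] {a b : ℕ} (h : a ∣ b) :
    (DistribSMul.toAddMonoidHom (ι → ZMod b) (a : ZMod b)).range.index = a ^ Nat.card ι := by
  rw [range_natCast_smul_eq_ker ι h, AddSubgroup.index_ker,
    AddMonoidHom.range_eq_top.2 (ZMod.castHom_surjective h).comp_left, AddSubgroup.card_top,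
    Nat.card_fun, Nat.card_zmod]

lemma isLocalHom_castHom_pow (N : ℕ) {m : ℕ} (h : N ∣ N ^ m) :
    IsLocalHom (ZMod.castHom h (ZMod N)) := by
  refine ⟨fun x hx => ?_⟩
  obtain ⟨x, rfl⟩ := ZMod.intCast_surjective x
  rw [map_intCast, ZMod.coe_int_isUnit_iff_isCoprime] at hx
  rw [ZMod.coe_int_isUnit_iff_isCoprime, Nat.cast_pow]
  exact hx.pow_left

lemma card_ker_castHom {a b : ℕ} [NeZero b] (h : a ∣ b) :
    Nat.card (ZMod.castHom h (ZMod a)).toAddMonoidHom.ker = b / a := by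
  have hcard := card_ker_mul_card (f := (ZMod.castHom h (ZMod a)).toAddMonoidHom)
    (ZMod.castHom_surjective h)
  rw [Nat.card_zmod, Nat.card_zmod] at hcard
  exact Nat.eq_div_of_mul_eq_left (Nat.pos_of_dvd_of_pos h (NeZero.pos b)).ne' hcard

variable {ι : Type*} [Fintype ι] [DecidableEq ι]

/-- The density of the solutions of `A[v] = t` modulo `N`, where `A[v]` is the integral quadratic
form `vᵀ A v`. -/
noncomputable def localDensity (A : Matrix ι ι ℤ) (N : ℕ) (t : ℤ) : ℝ :=
  density fun v : ι → ZMod N => (A.map (Int.castRingHom (ZMod N))).toQuadraticForm' v = t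

/-- The density of the unimodular solutions of `A[v] = t` modulo `N`, among all vectors modulo
`N`. -/
noncomputable def unimodularDensity (A : Matrix ι ι ℤ) (N : ℕ) (t : ℤ) : ℝ :=
  density fun v : ι → ZMod N =>
    IsUnimodular v ∧ (A.map (Int.castRingHom (ZMod N))).toQuadraticForm' v = t

lemma localDensity_one (A : Matrix ι ι ℤ) (t : ℤ) : localDensity A 1 t = 1 :=
  density_of_forall fun _ => Subsingleton.elim _ _

lemma toQuadraticForm'_map_castHom (A : Matrix ι ι ℤ) {a b : ℕ} (h : a ∣ b) (v : ι → ZMod b) :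
    ZMod.castHom h (ZMod a) ((A.map (Int.castRingHom (ZMod b))).toQuadraticForm' v) =
      (A.map (Int.castRingHom (ZMod a))).toQuadraticForm' (ZMod.castHom h (ZMod a) ∘ v) := by
  rw [map_toQuadraticForm', Matrix.map_map, ← RingHom.coe_comp, RingHom.ext_int (RingHom.comp _ _)]

lemma isUnit_det_map {A : Matrix ι ι ℤ} {N : ℕ} (hA : IsCoprime (N : ℤ) (A + Aᵀ).det) (m : ℕ) :
    IsUnit (A.map (Int.castRingHom (ZMod (N ^ m))) +
      (A.map (Int.castRingHom (ZMod (N ^ m))))ᵀ).det := by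
  have h : IsUnit (((A + Aᵀ).det : ℤ) : ZMod (N ^ m)) := by
    rw [ZMod.coe_int_isUnit_iff_isCoprime, Nat.cast_pow]
    exact hA.pow_left
  rwa [← transpose_map, ← Matrix.map_add _ (map_add _), ← RingHom.mapMatrix_apply,
    ← RingHom.map_det]

lemma unimodularDensity_pow_add_two {A : Matrix ι ι ℤ} {N : ℕ} [NeZero N]
    (hA : IsCoprime (N : ℤ) (A + Aᵀ).det) (t : ℤ) (m : ℕ) :
    unimodularDensity A (N ^ (m + 2)) t = unimodularDensity A (N ^ (m + 1)) t / N := by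
  have hdvd : N ^ (m + 1) ∣ N ^ (m + 2) := pow_dvd_pow N (Nat.le_succ _)
  have hker (x y : ZMod (N ^ (m + 2))) (hx : ZMod.castHom hdvd (ZMod (N ^ (m + 1))) x = 0)
      (hy : ZMod.castHom hdvd (ZMod (N ^ (m + 1))) y = 0) : x * y = 0 := by
    obtain ⟨c, rfl⟩ := (castHom_eq_zero_iff hdvd x).1 hx
    obtain ⟨d, rfl⟩ := (castHom_eq_zero_iff hdvd y).1 hy
    have h : ((N ^ (m + 2) : ℕ) : ZMod (N ^ (m + 2))) = 0 := ZMod.natCast_self _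
    push_cast at h ⊢
    linear_combination (N : ZMod (N ^ (m + 2))) ^ m * c * d * h
  have hdiv : N ^ (m + 2) / N ^ (m + 1) = N := by
    rw [pow_succ N (m + 1), Nat.mul_div_cancel_left _ (NeZero.pos _)]
  rw [unimodularDensity, density_isUnimodular_and_eq (ZMod.castHom_surjective hdvd) hker
    (isUnit_det_map hA _), card_ker_castHom, hdiv, div_eq_inv_mul, unimodularDensity, map_intCast,
    Matrix.map_map, ← RingHom.coe_comp, RingHom.ext_int (RingHom.comp _ _)]

lemma unimodularDensity_pow_succ {A : Matrix ι ι ℤ} {N : ℕ} [NeZero N]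
    (hA : IsCoprime (N : ℤ) (A + Aᵀ).det) (t : ℤ) (m : ℕ) :
    unimodularDensity A (N ^ (m + 1)) t = unimodularDensity A N t / N ^ m := by
  induction m with
  | zero => rw [zero_add, pow_one, pow_zero, div_one]
  | succ m ih => rw [unimodularDensity_pow_add_two hA, ih, div_div, pow_succ]

lemma unimodularDensity_eq_localDensity (A : Matrix ι ι ℤ) {N : ℕ} {t : ℤ}
    (ht : IsCoprime (N : ℤ) t) : unimodularDensity A N t = localDensity A N t :=
  density_congr fun _ => and_iff_right_of_imp fun hv => isUnimodular_of_isUnit_toQuadraticForm'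
    (hv ▸ (ZMod.coe_int_isUnit_iff_isCoprime t N).2 ht)

lemma localDensity_pow_succ_of_isCoprime {A : Matrix ι ι ℤ} {N : ℕ} [NeZero N]
    (hA : IsCoprime (N : ℤ) (A + Aᵀ).det) {t : ℤ} (ht : IsCoprime (N : ℤ) t) (m : ℕ) :
    localDensity A (N ^ (m + 1)) t = localDensity A N t / N ^ m := by
  rw [← unimodularDensity_eq_localDensity A ht, ← unimodularDensity_eq_localDensity A
    (by rw [Nat.cast_pow]; exact ht.pow_left), unimodularDensity_pow_succ hA]

variable {p : ℕ} [Fact p.Prime]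

omit [DecidableEq ι] in
lemma not_isUnimodular_iff_mem_range {m : ℕ} {v : ι → ZMod (p ^ (m + 1))} :
    ¬IsUnimodular v ↔
      v ∈ (DistribSMul.toAddMonoidHom (ι → ZMod (p ^ (m + 1))) (p : ZMod (p ^ (m + 1)))).range := by
  have hdvd : p ∣ p ^ (m + 1) := dvd_pow_self p m.succ_ne_zero
  have := isLocalHom_castHom_pow p hdvd
  rw [range_natCast_smul_eq_ker ι hdvd, isUnimodular_iff_of_isLocalHom
    (ZMod.castHom_surjective hdvd), isUnimodular_iff_ne_zero, not_not]
  rfl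

lemma density_not_isUnimodular_and_eq (A : Matrix ι ι ℤ) (t : ℤ) (m : ℕ) :
    density (fun v : ι → ZMod (p ^ (m + 2)) => ¬IsUnimodular v ∧
      (A.map (Int.castRingHom _)).toQuadraticForm' v = ((p ^ 2 * t : ℤ) : ZMod (p ^ (m + 2)))) =
      localDensity A (p ^ m) t / p ^ Fintype.card ι := by
  have hdvd : p ^ m ∣ p ^ (m + 2) := pow_dvd_pow p (Nat.le_add_right m 2)
  have hsurj : Function.Surjective ((ZMod.castHom hdvd (ZMod (p ^ m))).toAddMonoidHom.compLeft ι) :=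
    (ZMod.castHom_surjective hdvd).comp_left
  simp only [not_isUnimodular_iff_mem_range]
  rw [density_mem_range_and, index_range_natCast_smul ι (dvd_pow_self p (m + 1).succ_ne_zero),
    Nat.card_eq_fintype_card, Nat.cast_pow, localDensity, ← density_comp_of_surjective hsurj]
  refine congrArg (· / _) (density_congr fun v => ?_)
  have h := natCast_mul_eq_natCast_mul_iff (a := p ^ 2) (b := p ^ m) (c := p ^ (m + 2))
    (NeZero.ne _) (by ring) ((A.map (Int.castRingHom _)).toQuadraticForm' v) t
  rw [toQuadraticForm'_map_castHom, map_intCast] at h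
  refine Iff.trans ?_ h
  rw [DistribSMul.toAddMonoidHom_apply, QuadraticMap.map_smul]
  push_cast
  rw [smul_eq_mul, pow_two]

lemma localDensity_pow_add_two {A : Matrix ι ι ℤ} (hA : IsCoprime (p : ℤ) (A + Aᵀ).det) (t : ℤ)
    (m : ℕ) :
    localDensity A (p ^ (m + 2)) (p ^ 2 * t) =
      unimodularDensity A p 0 / p ^ (m + 1) + localDensity A (p ^ m) t / p ^ Fintype.card ι := by
  have h : unimodularDensity A p (p ^ 2 * t) = unimodularDensity A p 0 := by
    simp [unimodularDensity]
  rw [localDensity, ← density_and_add_density_and_not _ IsUnimodular,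
    density_not_isUnimodular_and_eq, ← h, ← unimodularDensity_pow_succ hA]
  rfl

lemma unimodularDensity_zero (A : Matrix ι ι ℤ) :
    unimodularDensity A p 0 = localDensity A p 0 - 1 / p ^ Fintype.card ι := by
  rw [localDensity, ← density_and_add_density_and_not _ IsUnimodular, unimodularDensity,
    eq_sub_iff_add_eq]
  simp only [isUnimodular_iff_ne_zero, not_not]
  have h : density (fun v : ι → ZMod p =>
      v = 0 ∧ (A.map (Int.castRingHom (ZMod p))).toQuadraticForm' v = ((0 : ℤ) : ZMod p)) =
      1 / p ^ Fintype.card ι := by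
    rw [density_congr (Q := (· = 0)) fun v => and_iff_left_of_imp ?_, density_eq]
    · simp
    · rintro rfl
      simp
  rw [h]

end LocalDensity

section Series

lemma summable_geometric_mul_of_le_one {a z : ℝ} (ha : |a| < 1) (hz : |z| < 1) {c : ℕ × ℕ → ℝ}
    (hc₀ : ∀ x, 0 ≤ c x) (hc₁ : ∀ x, c x ≤ 1) :
    Summable fun x : ℕ × ℕ => a ^ x.1 * z ^ x.2 * c x := by
  have hgeom : Summable fun x : ℕ × ℕ => |a| ^ x.1 * |z| ^ x.2 :=
    (summable_geometric_of_lt_one (abs_nonneg a) ha).mul_of_nonneg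
      (summable_geometric_of_lt_one (abs_nonneg z) hz) (fun _ => by positivity)
      (fun _ => by positivity)
  refine hgeom.of_norm_bounded fun x => ?_
  rw [Real.norm_eq_abs, abs_mul, abs_mul, abs_pow, abs_pow, abs_of_nonneg (hc₀ x)]
  exact mul_le_of_le_one_right (by positivity) (hc₁ x)

lemma abs_div_pow_lt_one {x y : ℝ} (hx : |x| < 1) (hy : 1 ≤ y) (n : ℕ) : |x / y ^ n| < 1 := by
  rw [abs_div, abs_of_pos (a := y ^ n) (by positivity)]
  exact (div_le_self (abs_nonneg x) (one_le_pow₀ hy)).trans_lt hx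

lemma hasSum_of_row_recurrence {a b H : ℝ} {f : ℕ × ℕ → ℝ} {R : ℕ → ℝ} (ha : |a| < 1)
    (hab : a * b ≠ 1) (hf : Summable f) (hR : ∀ T, HasSum (fun l => f (T, l)) (a ^ T * R T))
    (hrec : ∀ T, R (T + 1) = H + b * R T) :
    HasSum f ((R 0 + a * H / (1 - a)) / (1 - a * b)) := by
  have hrows : HasSum (fun T => a ^ T * R T) (∑' x, f x) := hf.hasSum.prod_fiberwise hR
  have hshift : HasSum (fun T => a ^ (T + 1) * R (T + 1))
      (a * H * (1 - a)⁻¹ + a * b * ∑' x, f x) := by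
    refine (((hasSum_geometric_of_abs_lt_one ha).mul_left (a * H)).add
      (hrows.mul_left (a * b))).congr_fun fun T => ?_
    rw [hrec]
    ring
  have hself : ∑' x, f x = R 0 + (a * H * (1 - a)⁻¹ + a * b * ∑' x, f x) := by
    rw [← hshift.tsum_eq, ← hrows.tsum_eq, hrows.summable.tsum_eq_zero_add, pow_zero, one_mul]
  refine hf.hasSum_iff.2 ((eq_div_iff (sub_ne_zero.2 hab.symm)).2 ?_)
  rw [div_eq_mul_inv]
  linear_combination hself

variable {ι : Type*} [Fintype ι] [DecidableEq ι] {p : ℕ} [Fact p.Prime] {A : Matrix ι ι ℤ}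
  {a z : ℝ}

lemma hasSum_localDensity_of_isCoprime (hA : IsCoprime (p : ℤ) (A + Aᵀ).det) {t : ℤ}
    (ht : IsCoprime (p : ℤ) t) (hz : |z / p| < 1) :
    HasSum (fun l => z ^ l * localDensity A (p ^ l) t)
      (1 + z * localDensity A p t / (1 - z / p)) := by
  have hshift : HasSum (fun l => z ^ (l + 1) * localDensity A (p ^ (l + 1)) t)
      (z * localDensity A p t * (1 - z / p)⁻¹) :=
    ((hasSum_geometric_of_abs_lt_one hz).mul_left _).congr_fun fun l => by
      rw [localDensity_pow_succ_of_isCoprime hA ht, div_pow]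
      ring
  convert hshift.zero_add (f := fun l => z ^ l * localDensity A (p ^ l) t) using 2
  · rw [pow_zero, pow_zero, localDensity_one, one_mul]
  · exact div_eq_mul_inv _ _

lemma hasSum_localDensity_sq_mul (hA : IsCoprime (p : ℤ) (A + Aᵀ).det) {t : ℤ} {S : ℝ}
    (hz : |z / p| < 1) (hS : HasSum (fun l => z ^ l * localDensity A (p ^ l) t) S) :
    HasSum (fun l => z ^ l * localDensity A (p ^ l) (p ^ 2 * t))
      (1 + z * (localDensity A p 0 - z / p ^ (Fintype.card ι + 1)) / (1 - z / p) +
        z ^ 2 / p ^ Fintype.card ι * S) := by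
  have hp : (p : ℝ) ≠ 0 := NeZero.ne _
  have hzp : (p - z : ℝ) ≠ 0 := by
    rw [← mul_div_cancel₀ z hp, ← mul_one_sub]
    exact mul_ne_zero hp (by linarith [(abs_lt.1 hz).2])
  have hshift : HasSum (fun l => z ^ (l + 2) * localDensity A (p ^ (l + 2)) (p ^ 2 * t))
      (z ^ 2 / p * unimodularDensity A p 0 * (1 - z / p)⁻¹ + z ^ 2 / p ^ Fintype.card ι * S) := by
    refine (((hasSum_geometric_of_abs_lt_one hz).mul_left _).add (hS.mul_left _)).congr_fun ?_
    intro l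
    rw [localDensity_pow_add_two hA, div_pow]
    field_simp
    ring
  convert (hshift.zero_add (f := fun l => z ^ (l + 1) * localDensity A (p ^ (l + 1)) (p ^ 2 * t))
    ).zero_add (f := fun l => z ^ l * localDensity A (p ^ l) (p ^ 2 * t)) using 1
  have h : localDensity A p (p ^ 2 * t) = localDensity A p 0 := by simp [localDensity]
  simp only [pow_zero, zero_add, pow_one, localDensity_one, h, unimodularDensity_zero]
  field_simp
  ring

theorem hasSum_pow_mul_localDensity (hA : IsCoprime (p : ℤ) (A + Aᵀ).det) {t : ℤ}
    (ht : IsCoprime (p : ℤ) t) (ha : |a| < 1) (hz : |z| < 1) :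
    HasSum (fun x : ℕ × ℕ => a ^ x.1 * z ^ x.2 * localDensity A (p ^ x.2) (p ^ (2 * x.1) * t))
      ((1 + z * localDensity A p t / (1 - z / p) +
        a * (1 + z * (localDensity A p 0 - z / p ^ (Fintype.card ι + 1)) / (1 - z / p)) / (1 - a)) /
        (1 - a * (z ^ 2 / p ^ Fintype.card ι))) := by
  have hp : (1 : ℝ) ≤ p := mod_cast (Fact.out : p.Prime).one_le
  have hzp : |z / p| < 1 := by simpa only [pow_one] using abs_div_pow_lt_one hz hp 1
  have hab : a * (z ^ 2 / p ^ Fintype.card ι) ≠ 1 := by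
    have hz₂ : |z ^ 2| < 1 := by
      rw [abs_pow]
      exact pow_lt_one₀ (abs_nonneg z) hz two_ne_zero
    refine ((le_abs_self _).trans_lt ?_).ne
    rw [abs_mul]
    exact mul_lt_one_of_nonneg_of_lt_one_left (abs_nonneg a) ha (abs_div_pow_lt_one hz₂ hp _).le
  have hsum := summable_geometric_mul_of_le_one ha hz
    (c := fun x => localDensity A (p ^ x.2) (p ^ (2 * x.1) * t))
    (fun _ => density_nonneg _) fun _ => density_le_one _
  let H := 1 + z * (localDensity A p 0 - z / p ^ (Fintype.card ι + 1)) / (1 - z / p)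
  let R (T : ℕ) : ℝ := ∑' l, z ^ l * localDensity A (p ^ l) (p ^ (2 * T) * t)
  have hstep {T : ℕ} {S : ℝ}
      (hS : HasSum (fun l => z ^ l * localDensity A (p ^ l) (p ^ (2 * T) * t)) S) :
      HasSum (fun l => z ^ l * localDensity A (p ^ l) (p ^ (2 * (T + 1)) * t))
        (H + z ^ 2 / p ^ Fintype.card ι * S) := by
    rw [show (p : ℤ) ^ (2 * (T + 1)) * t = p ^ 2 * (p ^ (2 * T) * t) by ring]
    exact hasSum_localDensity_sq_mul hA hzp hS
  have hrow₀ : HasSum (fun l => z ^ l * localDensity A (p ^ l) (p ^ (2 * 0) * t))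
      (1 + z * localDensity A p t / (1 - z / p)) := by
    simpa only [mul_zero, pow_zero, one_mul] using hasSum_localDensity_of_isCoprime hA ht hzp
  have hrow (T : ℕ) : HasSum (fun l => z ^ l * localDensity A (p ^ l) (p ^ (2 * T) * t)) (R T) := by
    induction T with
    | zero => exact hrow₀.summable.hasSum
    | succ T ih => exact (hstep ih).summable.hasSum
  rw [← hrow₀.tsum_eq]
  refine hasSum_of_row_recurrence (R := R) ha hab hsum (fun T => ?_) fun T => ?_
  · simpa only [mul_assoc] using (hrow T).mul_left (a ^ T)
  · exact (hstep (hrow T)).tsum_eq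

end Series

section FiniteField

variable {F κ : Type*} [Field F] [Fintype κ]

lemma density_dotProduct_eq [Finite F] {y : κ → F} (hy : y ≠ 0) (s : F) :
    density (fun x : κ → F => y ⬝ᵥ x = s) = (Nat.card F : ℝ)⁻¹ := by
  have hsurj : Function.Surjective (dotProductBilin F F y).toAddMonoidHom :=
    LinearMap.surjective fun h => hy (dotProduct_eq_zero y fun x => DFunLike.congr_fun h x)
  rw [← density_eq s, ← density_comp_of_surjective hsurj]
  rfl

lemma density_eq_zero [Finite F] :
    density (fun y : κ → F => y = 0) = 1 / (Nat.card F : ℝ) ^ Fintype.card κ := by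
  rw [density_eq, Nat.card_fun, Nat.card_eq_fintype_card (α := κ), Nat.cast_pow, one_div]

variable {G : Type*} [AddGroup G] [Finite G]

lemma density_eq_zero_and_add_dotProduct_eq [Finite F] (g : G → F) (t : F) :
    density (fun v : (G × (κ → F)) × (κ → F) => v.1.2 = 0 ∧ g v.1.1 + v.1.2 ⬝ᵥ v.2 = t) =
      density (g · = t) * (1 / (Nat.card F : ℝ) ^ Fintype.card κ) := by
  have hfst : Function.Surjective (AddMonoidHom.fst (G × (κ → F)) (κ → F)) := Prod.fst_surjective
  rw [← density_eq_zero, ← density_prod, ← density_comp_of_surjective hfst]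
  refine density_congr fun v => ?_
  rw [and_comm]
  exact and_congr_left fun h => by rw [h, zero_dotProduct, add_zero]; rfl

lemma density_ne_zero_and_add_dotProduct_eq [Finite F] (g : G → F) (t : F) :
    density (fun v : (G × (κ → F)) × (κ → F) => v.1.2 ≠ 0 ∧ g v.1.1 + v.1.2 ⬝ᵥ v.2 = t) =
      (Nat.card F : ℝ)⁻¹ * (1 - 1 / (Nat.card F : ℝ) ^ Fintype.card κ) := by
  have hfst : Function.Surjective (AddMonoidHom.fst (G × (κ → F)) (κ → F)) := Prod.fst_surjective
  have hsnd : Function.Surjective (AddMonoidHom.snd G (κ → F)) := Prod.snd_surjective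
  rw [← density_eq_zero, ← density_not, ← density_comp_of_surjective hsnd]
  refine density_eq_mul_of_fiber hfst (fun _ h => h.1) fun v (hv : v.1.2 ≠ 0) => ?_
  let f := (AddMonoidHom.snd (G × (κ → F)) (κ → F)).comp
    (AddMonoidHom.fst (G × (κ → F)) (κ → F)).ker.subtype
  have hf : Function.Surjective f := fun x => ⟨⟨(0, x), rfl⟩, rfl⟩
  rw [← density_dotProduct_eq hv (t - g v.1.1 - v.1.2 ⬝ᵥ v.2), ← density_comp_of_surjective hf]
  refine density_congr fun d => ?_
  have hvd : (v + d.1).1 = v.1 := by rw [Prod.fst_add, show d.1.1 = 0 from d.2, add_zero]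
  rw [hvd, and_iff_right hv, Prod.snd_add, dotProduct_add, eq_sub_iff_add_eq', eq_sub_iff_add_eq']
  rfl

lemma density_mul_sq_eq [Fintype F] [DecidableEq F] (hF : ringChar F ≠ 2) {D : F} (hD : D ≠ 0)
    (t : F) :
    density (fun x : F => D * x ^ 2 = t) = (1 + (quadraticChar F (D * t) : ℝ)) / Nat.card F := by
  have h := density_comp_equiv (Equiv.mulLeft₀ D hD) (· ^ 2 = D * t)
  have completed (x : F) : D * x ^ 2 = t ↔ Equiv.mulLeft₀ D hD x ^ 2 = D * t := by
    rw [Equiv.mulLeft₀_apply, mul_pow, pow_two D, mul_assoc, mul_right_inj' hD]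
  have card_sqrts : (Nat.card {x : F // x ^ 2 = D * t} : ℤ) = quadraticChar F (D * t) + 1 := by
    rw [← quadraticChar_card_sqrts hF, Set.toFinset_card, Nat.card_eq_fintype_card]
    rfl
  rw [density_congr completed, h, density, add_comm, ← Int.cast_natCast, card_sqrts]
  push_cast
  rfl

end FiniteField

section OddSplit

variable {R S : Type*} [CommRing R] [CommRing S] (κ : Type*) [DecidableEq κ]

/-- The matrix of the quadratic form `D x² + ∑ i, y i * z i`, the orthogonal sum of `⟨D⟩` and
`|κ|` hyperbolic planes, in the coordinates `x`, `y`, `z`. -/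
def oddSplitMatrix (D : R) : Matrix (Unit ⊕ (κ ⊕ κ)) (Unit ⊕ (κ ⊕ κ)) R :=
  fromBlocks (of fun _ _ => D) 0 0 (fromBlocks 0 1 0 0)

variable {κ}

lemma oddSplitMatrix_map (φ : R →+* S) (D : R) :
    (oddSplitMatrix κ D).map φ = oddSplitMatrix κ (φ D) := by
  simp only [oddSplitMatrix, fromBlocks_map, Matrix.map_zero φ (map_zero φ),
    Matrix.map_one φ (map_zero φ) (map_one φ)]
  rfl

variable [Fintype κ]

lemma toQuadraticForm'_oddSplitMatrix (D : R) (v : Unit ⊕ (κ ⊕ κ) → R) :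
    (oddSplitMatrix κ D).toQuadraticForm' v =
      D * v (.inl ()) ^ 2 + (v ∘ .inr ∘ .inl) ⬝ᵥ (v ∘ .inr ∘ .inr) := by
  rw [toQuadraticForm'_apply, oddSplitMatrix, fromBlocks_mulVec, fromBlocks_mulVec]
  simp only [zero_mulVec, one_mulVec, add_zero, zero_add]
  simp only [dotProduct, mulVec, Fintype.sum_sum_type, Finset.univ_unique, Finset.sum_singleton,
    PUnit.default_eq_unit, Sum.elim_inl, Sum.elim_inr, of_apply, Function.comp_apply, Pi.zero_apply,
    mul_zero, Finset.sum_const_zero, add_zero]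
  ring

lemma isCoprime_det_oddSplitMatrix {N D : ℤ} (h2 : IsCoprime N 2) (hD : IsCoprime N D) :
    IsCoprime N (oddSplitMatrix κ D + (oddSplitMatrix κ D)ᵀ).det := by
  have gram : oddSplitMatrix κ D + (oddSplitMatrix κ D)ᵀ =
      fromBlocks (of fun _ _ => 2 * D) 0 0 (fromBlocks 0 1 1 0) := by
    simp only [oddSplitMatrix, fromBlocks_transpose, fromBlocks_add, two_mul, transpose_zero,
      transpose_one, add_zero, zero_add]
    rfl
  have isUnit_det : IsUnit (fromBlocks 0 1 1 0 : Matrix (κ ⊕ κ) (κ ⊕ κ) ℤ).det :=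
    isUnit_det_of_left_inverse (B := fromBlocks 0 1 1 0) (by simp [fromBlocks_multiply])
  rw [gram, det_fromBlocks_zero₂₁, det_unique, of_apply, isCoprime_mul_unit_right_right isUnit_det]
  exact h2.mul_right hD

lemma density_oddSplitMatrix {F : Type*} [Field F] [Fintype F] [DecidableEq F]
    (hF : ringChar F ≠ 2) {D : F} (hD : D ≠ 0) (t : F) :
    density (fun v => (oddSplitMatrix κ D).toQuadraticForm' v = t) =
      (1 + (quadraticChar F (D * t) : ℝ) / Nat.card F ^ Fintype.card κ) / Nat.card F := by
  let e : (Unit ⊕ (κ ⊕ κ) → F) ≃ (F × (κ → F)) × (κ → F) :=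
    (Equiv.sumArrowEquivProdArrow _ _ _).trans <| (Equiv.prodCongr (Equiv.funUnique Unit F)
      (Equiv.sumArrowEquivProdArrow _ _ _)).trans (Equiv.prodAssoc _ _ _).symm
  simp only [toQuadraticForm'_oddSplitMatrix]
  refine (density_comp_equiv e fun v => D * v.1.1 ^ 2 + v.1.2 ⬝ᵥ v.2 = t).trans ?_
  rw [← density_and_add_density_and_not _ fun v => v.1.2 = 0,
    density_eq_zero_and_add_dotProduct_eq (D * · ^ 2),
    density_ne_zero_and_add_dotProduct_eq (D * · ^ 2), density_mul_sq_eq hF hD]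
  ring

end OddSplit

section OddSplitSeries

variable {p : ℕ} [Fact p.Prime] {D : ℤ} (κ : Type*) [Fintype κ] [DecidableEq κ]

lemma localDensity_oddSplitMatrix (hp : p ≠ 2) (hD : ¬(p : ℤ) ∣ D) (t : ℤ) :
    localDensity (oddSplitMatrix κ D) p t =
      (1 + (quadraticChar (ZMod p) (D * t) : ℝ) / p ^ Fintype.card κ) / p := by
  have hD₀ : Int.castRingHom (ZMod p) D ≠ 0 := mt (ZMod.intCast_zmod_eq_zero_iff_dvd D p).1 hD
  have hchar : ringChar (ZMod p) ≠ 2 := by rwa [ZMod.ringChar_zmod_n]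
  rw [localDensity, oddSplitMatrix_map, density_oddSplitMatrix hchar hD₀, Nat.card_zmod]
  rfl

theorem hasSum_localDensity_oddSplitMatrix (hp : p ≠ 2) (hD : ¬(p : ℤ) ∣ D) {ε a z w : ℝ}
    (hε : ε = quadraticChar (ZMod p) D) (ha : |a| < 1) (hz : |z| < 1)
    (hw : w = z / p ^ (Fintype.card κ + 1)) :
    HasSum (fun x : ℕ × ℕ => a ^ x.1 * z ^ x.2 *
        localDensity (oddSplitMatrix κ D) (p ^ x.2) (p ^ (2 * x.1)))
      ((1 + ε * w) * (1 - ε * a * w) /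
        ((1 - z / p) * (1 - a) * (1 - a * (z ^ 2 / p ^ (2 * Fintype.card κ + 1))))) := by
  have prime : Prime (p : ℤ) := Nat.prime_iff_prime_int.1 Fact.out
  have coprime_two : IsCoprime (p : ℤ) 2 :=
    mod_cast Nat.isCoprime_iff_coprime.2 ((Nat.coprime_primes Fact.out Nat.prime_two).2 hp)
  have coprime_det := isCoprime_det_oddSplitMatrix (κ := κ) coprime_two
    (prime.coprime_iff_not_dvd.2 hD)
  have hD₀ : (D : ZMod p) ≠ 0 := mt (ZMod.intCast_zmod_eq_zero_iff_dvd D p).1 hD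
  have hε₂ : ε ^ 2 = 1 := by
    rw [hε]
    exact_mod_cast quadraticChar_sq_one hD₀
  convert hasSum_pow_mul_localDensity coprime_det isCoprime_one_right ha hz using 1
  · simp only [mul_one]
  · have card_eq : Fintype.card (Unit ⊕ (κ ⊕ κ)) = 2 * Fintype.card κ + 1 := by
      rw [Fintype.card_sum, Fintype.card_sum, Fintype.card_unit]
      ring
    have coeff_one : z * ((1 + ε / p ^ Fintype.card κ) / p) = z / p + ε * w := by rw [hw]; ring
    have coeff_zero : z * (1 / p - z / p ^ (2 * Fintype.card κ + 1 + 1)) = z / p - w ^ 2 := by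
      rw [hw]
      ring
    have hp₁ : (1 : ℝ) ≤ p := mod_cast (Fact.out : p.Prime).one_le
    have ha₁ : 1 - a ≠ 0 := by linarith [(abs_lt.1 ha).2]
    have hzp : (p : ℝ) - z ≠ 0 := by linarith [(abs_lt.1 hz).2]
    simp only [localDensity_oddSplitMatrix κ hp hD, card_eq, Int.cast_one, mul_one, Int.cast_zero,
      mul_zero, MulChar.map_zero, zero_div, add_zero, ← hε]
    rw [coeff_one, coeff_zero, div_mul_eq_div_div]
    refine congrArg (· / _) ?_
    field_simp
    linear_combination (-a * p * w ^ 2) * hε₂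

end OddSplitSeries

section Coordinates

variable {k : ℕ}

lemma two_mul_add_one_lt (i : Fin k) : 2 * (i : ℕ) + 1 < 2 * k + 1 := by
  omega

lemma two_mul_add_two_lt (i : Fin k) : 2 * (i : ℕ) + 2 < 2 * k + 1 := by
  omega

variable (k)

/-- The coordinates `x`, `y i`, `z i` of `oddSplitMatrix (Fin k) D`, listed in the order
`x, y 0, z 0, y 1, z 1, …`. -/
def interleave : Unit ⊕ (Fin k ⊕ Fin k) → Fin (2 * k + 1) :=
  Sum.elim (fun _ => 0) (Sum.elim (fun i => ⟨2 * i + 1, two_mul_add_one_lt i⟩)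
    fun i => ⟨2 * i + 2, two_mul_add_two_lt i⟩)

lemma bijective_interleave : Function.Bijective (interleave k) := by
  refine (Fintype.bijective_iff_injective_and_card _).2 ⟨?_, ?_⟩
  · rintro (_ | i | i) (_ | j | j) h <;> simp [interleave, Fin.ext_iff] at h ⊢ <;> omega
  · simp only [Fintype.card_sum, Fintype.card_unique, Fintype.card_fin]
    omega

lemma card_div_pow_eq_localDensity (D t : ℤ) (N : ℕ) :
    (Nat.card {v : Fin (2 * k + 1) → ZMod N // D * v 0 ^ 2 + ∑ i : Fin k,
        v ⟨2 * i + 1, two_mul_add_one_lt i⟩ * v ⟨2 * i + 2, two_mul_add_two_lt i⟩ = (t : ZMod N)} :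
      ℝ) / (N : ℝ) ^ (2 * k + 1) = localDensity (oddSplitMatrix (Fin k) D) N t := by
  have h := density_comp_equiv
    ((Equiv.ofBijective _ (bijective_interleave k)).arrowCongr (Equiv.refl (ZMod N))).symm
    fun v => (oddSplitMatrix (Fin k) (D : ZMod N)).toQuadraticForm' v = t
  rw [localDensity, oddSplitMatrix_map, eq_intCast, ← h, density, Nat.card_fun, Nat.card_zmod,
    Nat.card_fin, Nat.cast_pow]
  simp only [toQuadraticForm'_oddSplitMatrix]
  rfl

end Coordinates

open Classical in
theorem stmt_16 (p : ℕ) (hp : p.Prime) (hp2 : p ≠ 2) (Δ : ℤ) (hΔ : ¬ (p : ℤ) ∣ Δ)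
    (ε : ℝ) (hε : ε = if IsSquare (Δ : ZMod p) then 1 else -1) (k : ℕ)
    (a z : ℝ) (ha : |a| < 1) (hz : |z| < 1)
    (w u : ℝ) (hw : w = z / p ^ (k + 1)) (hu : u = z ^ 2 / p ^ (2 * k + 1)) :
    HasSum
      (fun Tℓ : ℕ × ℕ => a ^ Tℓ.1 * z ^ Tℓ.2 *
        ((Nat.card {v : Fin (2 * k + 1) → ZMod (p ^ Tℓ.2) //
            (Δ : ZMod (p ^ Tℓ.2)) * v ⟨0, by omega⟩ ^ 2 +
              ∑ i : Fin k, v ⟨2 * i + 1, by have := i.isLt; omega⟩ *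
                v ⟨2 * i + 2, by have := i.isLt; omega⟩
              = ((p ^ (2 * Tℓ.1) : ℕ) : ZMod (p ^ Tℓ.2))} : ℝ)
          / p ^ ((2 * k + 1) * Tℓ.2)))
      ((1 - w ^ 2) * (1 - ε * a * w)
        / ((1 - z / p) * (1 - a) * (1 - ε * w) * (1 - a * u))) := by
  have : Fact p.Prime := ⟨hp⟩
  have hχ : ε = quadraticChar (ZMod p) Δ := by
    have hΔ₀ : (Δ : ZMod p) ≠ 0 := mt (ZMod.intCast_zmod_eq_zero_iff_dvd Δ p).1 hΔ
    rw [hε, quadraticChar_apply, quadraticCharFun, if_neg hΔ₀]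
    split_ifs <;> simp
  have abs_ε : |ε| = 1 := by rw [hε]; split_ifs <;> simp
  have hεw : 1 - ε * w ≠ 0 := by
    have h : |ε * w| < 1 := by
      rw [abs_mul, abs_ε, one_mul, hw]
      exact abs_div_pow_lt_one hz (mod_cast hp.one_le) _
    linarith [(abs_lt.1 h).2]
  have factor : 1 - w ^ 2 = (1 + ε * w) * (1 - ε * w) := by
    have hε₂ : ε ^ 2 = 1 := by rw [← sq_abs, abs_ε, one_pow]
    linear_combination w ^ 2 * hε₂
  rw [factor, mul_right_comm, mul_right_comm _ (1 - ε * w), mul_div_mul_right _ _ hεw]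
  convert hasSum_localDensity_oddSplitMatrix (Fin k) hp2 hΔ hχ ha hz (w := w)
    (by rwa [Fintype.card_fin]) using 1
  · funext x
    rw [← card_div_pow_eq_localDensity, mul_comm _ x.2, pow_mul (p : ℝ)]
    norm_cast
  · rw [hu, Fintype.card_fin]
end
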